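/- arXiv:1304.0431 — 6 statements merged into one kernel-verified Lean document; each statement's English description precedes it below -/
import Mathlib

section
/- Let f : I ⊆ (0,∞) → ℝ be differentiable on the interior I° of the interval I, let a, b ∈ I with 0 < a < b, and suppose f' is integrable on [a,b]. Then f(√(ab))² − (1/(ln b − ln a)) ∫_a^b (f(x)/x)·f(ab/x) dx = ∫_0^1 [ (b/2)·ln(a/b)·t·(a/b)^{t/2}·f(a^{1−t}(ab)^{t/2})·f'(b^{1−t}(ab)^{t/2}) + (a/2)·ln(b/a)·t·(b/a)^{t/2}·f'(a^{1−t}(ab)^{t/2})·f(b^{1−t}(ab)^{t/2}) ] dt. -/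
/-!
Put `L = log b - log a`, `p t = exp (log a + t * (L / 2))` and `h = f ∘ p`. Then `p` maps `[0, 2]`
increasingly onto `[a, b]`, `a * b / p t = p (2 - t)`, and the two arguments of `f` on the right-hand
side are `p t` and `p (2 - t)`. With `G t = h t * h (2 - t)` the right-hand integrand is `t * G' t`,
so integration by parts turns the right-hand side into `G 1 - ∫ t in 0..1, G t`; since `G` is
symmetric about `1`, the last integral is half of `∫ t in 0..2, G t`, which the substitution `x = p t`
identifies with the integral on the left (`parts_symm` is this computation in the variable `t`).

Nothing is assumed about continuity of `f` at the endpoints `a` and `b`. As `h'` is integrable, `h`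
agrees on the open interval with a function continuous on `[0, 2]` (`exists_continuousOn_extension`),
and the endpoint values do not affect the integrals.
-/

open Real MeasureTheory Set intervalIntegral

/-- A function on an open interval with integrable derivative extends continuously to the closed
interval: the extension is `h c + ∫ s in c..t, h' s` for an interior point `c`. -/
lemma exists_continuousOn_extension {h h' : ℝ → ℝ} {u v : ℝ} (huv : u < v)
    (hd : ∀ t ∈ Ioo u v, HasDerivAt h (h' t) t) (hi : IntervalIntegrable h' volume u v) :
    ∃ g : ℝ → ℝ, ContinuousOn g (Icc u v) ∧ EqOn g h (Ioo u v) := by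
  obtain ⟨c, hc⟩ : (Ioo u v).Nonempty := nonempty_Ioo.2 huv
  have hc' : c ∈ uIcc u v := by rw [uIcc_of_le huv.le]; exact Ioo_subset_Icc_self hc
  refine ⟨fun t => h c + ∫ s in c..t, h' s, ?_, fun t ht => ?_⟩
  · rw [← uIcc_of_le huv.le]
    exact continuousOn_const.add (continuousOn_primitive_interval' hi hc')
  · have hsub : uIcc c t ⊆ Ioo u v := ordConnected_Ioo.uIcc_subset hc ht
    have hii : IntervalIntegrable h' volume c t := by
      refine hi.mono_set ?_
      rw [uIcc_of_le huv.le]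
      exact hsub.trans Ioo_subset_Icc_self
    have := integral_eq_sub_of_hasDerivAt (fun x hx => hd x (hsub hx)) hii
    simp only [this]
    ring

/-- Integration by parts of `t * G' t` on `[0, 1]` for `G t = h t * h (2 - t)`, combined with the
symmetry of `G` about `1`. -/
lemma parts_symm {h h' : ℝ → ℝ} (hd : ∀ t ∈ Ioo (0:ℝ) 2, HasDerivAt h (h' t) t)
    (hi : IntervalIntegrable h' volume 0 2) :
    h 1 ^ 2 - (1 / 2) * ∫ t in (0:ℝ)..2, h t * h (2 - t)
      = ∫ t in (0:ℝ)..1, t * (h' t * h (2 - t) - h t * h' (2 - t)) := by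
  obtain ⟨g, gc, gh⟩ := exists_continuousOn_extension two_pos hd hi
  have gd : ∀ t ∈ Ioo (0:ℝ) 2, HasDerivAt g (h' t) t := fun t ht =>
    (hd t ht).congr_of_eventuallyEq (gh.eventuallyEq_of_mem (Ioo_mem_nhds ht.1 ht.2))
  have refl_Ioo : ∀ t ∈ Ioo (0:ℝ) 2, 2 - t ∈ Ioo (0:ℝ) 2 := fun t ht =>
    ⟨by linarith [ht.2], by linarith [ht.1]⟩
  have sub_Ioo : Ioo (0:ℝ) 1 ⊆ Ioo 0 2 := Ioo_subset_Ioo_right one_le_two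
  have sub_Icc : Icc (0:ℝ) 1 ⊆ Icc 0 2 := Icc_subset_Icc_right one_le_two
  have gc' : ContinuousOn (fun t => g (2 - t)) (Icc 0 2) :=
    gc.comp (by fun_prop) fun t ht => ⟨by linarith [ht.2], by linarith [ht.1]⟩
  have Gc : ContinuousOn (fun t => g t * g (2 - t)) (Icc 0 2) := gc.mul gc'
  have Gi : IntervalIntegrable (fun t => g t * g (2 - t)) volume 0 2 :=
    ContinuousOn.intervalIntegrable (by rwa [uIcc_of_le zero_le_two])
  have s01 : uIcc (0:ℝ) 1 ⊆ uIcc 0 2 := by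
    rwa [uIcc_of_le zero_le_one, uIcc_of_le zero_le_two]
  have s12 : uIcc (1:ℝ) 2 ⊆ uIcc 0 2 := by
    rw [uIcc_of_le one_le_two, uIcc_of_le zero_le_two]
    exact Icc_subset_Icc_left zero_le_one
  have Gi01 := Gi.mono_set s01
  have Gi12 := Gi.mono_set s12
  have e1 : ∫ t in (0:ℝ)..2, h t * h (2 - t) = ∫ t in (0:ℝ)..2, g t * g (2 - t) :=
    integral_congr_Ioo_of_le zero_le_two fun t ht => by
      simp only [gh ht, gh (refl_Ioo t ht)]
  have e2 : ∫ t in (0:ℝ)..1, t * (h' t * h (2 - t) - h t * h' (2 - t))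
      = ∫ t in (0:ℝ)..1, t * (h' t * g (2 - t) - g t * h' (2 - t)) :=
    integral_congr_Ioo_of_le zero_le_one fun t ht => by
      simp only [gh (sub_Ioo ht), gh (refl_Ioo t (sub_Ioo ht))]
  have e3 : ∫ t in (1:ℝ)..2, g t * g (2 - t) = ∫ t in (0:ℝ)..1, g t * g (2 - t) := by
    have := integral_comp_sub_left (fun t => g t * g (2 - t)) (2:ℝ) (a := 1) (b := 2)
    norm_num at this
    rw [← this]
    exact integral_congr fun t _ => mul_comm _ _
  have e4 := integral_add_adjacent_intervals Gi01 Gi12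
  have hi' : IntervalIntegrable (fun t => h' (2 - t)) volume 0 2 := by
    simpa using (hi.comp_sub_left 2).symm
  have Di : IntervalIntegrable (fun t => t * (h' t * g (2 - t) - g t * h' (2 - t)))
      volume 0 1 := by
    refine IntervalIntegrable.continuousOn_mul (IntervalIntegrable.sub ?_ ?_) continuousOn_id
    · refine (hi.mono_set s01).mul_continuousOn ?_
      rw [uIcc_of_le zero_le_one]; exact gc'.mono sub_Icc
    · refine (hi'.mono_set s01).continuousOn_mul ?_
      rw [uIcc_of_le zero_le_one]; exact gc.mono sub_Icc
  have ftc : ∫ t in (0:ℝ)..1,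
      (g t * g (2 - t) + t * (h' t * g (2 - t) - g t * h' (2 - t))) = g 1 * g 1 := by
    rw [integral_eq_sub_of_hasDerivAt_of_le (f := fun t => t * (g t * g (2 - t))) zero_le_one
      (continuousOn_id.mul (Gc.mono sub_Icc)) _ (Gi01.add Di)]
    · norm_num
    · intro t ht
      have d1 := gd t (sub_Ioo ht)
      have d2 : HasDerivAt (fun t => g (2 - t)) (-h' (2 - t)) t := by
        simpa [Function.comp_def] using (gd _ (refl_Ioo t (sub_Ioo ht))).comp t ((hasDerivAt_id t).const_sub 2)
      refine ((hasDerivAt_id t).mul (d1.mul d2)).congr_deriv ?_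
      simp only [id, Pi.mul_apply]
      ring
  rw [integral_add Gi01 Di] at ftc
  have g1 : g 1 = h 1 := gh ⟨one_pos, one_lt_two⟩
  rw [e1, e2, ← e4, e3, ← g1]
  linarith

theorem stmt_1 (I : Set ℝ) (hI : I ⊆ Set.Ioi (0:ℝ)) (hI' : I.OrdConnected)
    (f f' : ℝ → ℝ) (a b : ℝ) (ha : a ∈ I) (hb : b ∈ I) (ha0 : 0 < a) (hab : a < b)
    (hf : ∀ x ∈ interior I, HasDerivAt f (f' x) x)
    (hint : IntervalIntegrable f' volume a b) :
    f (Real.sqrt (a*b)) ^ 2 - (1 / (Real.log b - Real.log a)) * ∫ x in a..b, (f x / x) * f (a * b / x)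
      = ∫ t in (0:ℝ)..1,
          ((b / 2) * Real.log (a / b) * t * (a / b) ^ (t / 2) *
              f (a ^ (1 - t) * (a * b) ^ (t / 2)) * f' (b ^ (1 - t) * (a * b) ^ (t / 2))
            + (a / 2) * Real.log (b / a) * t * (b / a) ^ (t / 2) *
              f' (a ^ (1 - t) * (a * b) ^ (t / 2)) * f (b ^ (1 - t) * (a * b) ^ (t / 2))) := by
  have hb0 : 0 < b := ha0.trans hab
  have hL : 0 < log b - log a := sub_pos.2 (log_lt_log ha0 hab)
  set L := log b - log a with hLdef
  let p : ℝ → ℝ := fun t => exp (log a + t * (L / 2))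
  have pd : ∀ t, HasDerivAt p (p t * (L / 2)) t := fun t => by
    simpa using (((hasDerivAt_id t).mul_const (L / 2)).const_add (log a)).exp
  have pc : Continuous p := by fun_prop
  have ppos : ∀ t, 0 < p t := fun t => exp_pos _
  have p0 : p 0 = a := by simp [p, exp_log ha0]
  have p2 : p 2 = b := by
    have : log a + 2 * (L / 2) = log b := by rw [hLdef]; ring
    simp only [p, this, exp_log hb0]
  have p1 : p 1 = sqrt (a * b) := by
    have : p 1 * p 1 = a * b := by
      rw [← p0, ← p2]; simp only [p, ← exp_add]; congr 1; ring
    rw [← this, sqrt_mul_self (ppos 1).le]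
  have pdiv : ∀ t, a * b / p t = p (2 - t) := fun t => by
    rw [div_eq_iff (ppos t).ne', ← p0, ← p2]; simp only [p, ← exp_add]; congr 1; ring
  have pmono : StrictMono p := fun s t hst => by
    simp only [p]
    exact exp_lt_exp.2 (by nlinarith)
  have hsub : Ioo a b ⊆ interior I :=
    interior_maximal (Ioo_subset_Icc_self.trans (hI'.out ha hb)) isOpen_Ioo
  have hd : ∀ t ∈ Ioo (0:ℝ) 2, HasDerivAt (f ∘ p) (f' (p t) * (p t * (L / 2))) t := fun t ht =>
    (hf (p t) (hsub ⟨p0 ▸ pmono ht.1, p2 ▸ pmono ht.2⟩)).comp t (pd t)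
  have pnn : ∀ t, 0 ≤ p t * (L / 2) := fun t => by have := ppos t; positivity
  have hi : IntervalIntegrable (fun t => f' (p t) * (p t * (L / 2))) volume 0 2 := by
    have := (integrableOn_Icc_deriv_smul_iff_of_deriv_nonneg (g := f') (f := p) (a := 0) (b := 2)
      pc.continuousOn (fun t _ => pd t) (fun t _ => pnn t) zero_le_two).2
      (by rw [p0, p2]; exact (intervalIntegrable_iff_integrableOn_Icc_of_le hab.le).1 hint)
    rw [intervalIntegrable_iff_integrableOn_Icc_of_le zero_le_two]
    simpa only [smul_eq_mul, mul_comm] using this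
  have subst : ∫ x in a..b, (f x / x) * f (a * b / x)
      = (L / 2) * ∫ t in (0:ℝ)..2, (f ∘ p) t * (f ∘ p) (2 - t) := by
    have := integral_comp_mul_deriv_of_deriv_nonneg (a := 0) (b := 2) (f := p)
      (g := fun x => (f x / x) * f (a * b / x)) pc.continuousOn (fun t _ => pd t)
      (fun t _ => pnn t)
    rw [p0, p2] at this
    rw [← this, ← intervalIntegral.integral_const_mul]
    refine integral_congr fun t _ => ?_
    have := (ppos t).ne'
    simp only [Function.comp, pdiv]
    field_simp
  have key := parts_symm hd hi
  rw [subst, ← p1]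
  have hc : ∀ J : ℝ, 1 / L * (L / 2 * J) = 1 / 2 * J := fun J => by field_simp
  rw [hc]
  refine key.trans (integral_congr fun t _ => ?_)
  have ea : a ^ (1 - t) * (a * b) ^ (t / 2) = p t := by
    rw [rpow_def_of_pos ha0, rpow_def_of_pos (mul_pos ha0 hb0), log_mul ha0.ne' hb0.ne',
      ← exp_add]
    simp only [p, hLdef]; congr 1; ring
  have eb : b ^ (1 - t) * (a * b) ^ (t / 2) = p (2 - t) := by
    rw [rpow_def_of_pos hb0, rpow_def_of_pos (mul_pos ha0 hb0), log_mul ha0.ne' hb0.ne',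
      ← exp_add]
    simp only [p, hLdef]; congr 1; ring
  have la : log (b / a) = L := log_div hb0.ne' ha0.ne'
  have lb : log (a / b) = -L := by rw [log_div ha0.ne' hb0.ne', hLdef]; ring
  have ra : p t = a * (b / a) ^ (t / 2) := by
    rw [rpow_def_of_pos (div_pos hb0 ha0), la]
    simp only [p, exp_add, exp_log ha0]; congr 2; ring
  have rb : p (2 - t) = b * (a / b) ^ (t / 2) := by
    rw [rpow_def_of_pos (div_pos ha0 hb0), lb, ← p2]
    simp only [p, ← exp_add]; congr 1; ring
  simp only [Function.comp, ea, eb, la, lb]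
  calc t * (f' (p t) * (p t * (L / 2)) * f (p (2 - t))
        - f (p t) * (f' (p (2 - t)) * (p (2 - t) * (L / 2))))
      = t * (f' (p t) * ((a * (b / a) ^ (t / 2)) * (L / 2)) * f (p (2 - t))
        - f (p t) * (f' (p (2 - t)) * ((b * (a / b) ^ (t / 2)) * (L / 2)))) := by
        rw [← ra, ← rb]
    _ = _ := by ring
end

section
/- Let f : I ⊆ (0,∞) → (0,∞) be differentiable on I°, a, b ∈ I° with a < b, f' integrable on [a,b], and let |f'|^q be s-geometrically convex on [a,b] for some q ≥ 1 and s ∈ (0,1]. If |f'(a)| ≤ 1 and |f'(b)| ≤ 1, then |f(a)f(b) − (1/(ln b − ln a)) ∫_a^b (f(x)/x)·f(ab/x) dx| ≤ ln(b/a)·(1/2)^{2−1/q}·[ b·|f'(b)|^s·M₁·h₁(θ)^{1/q} + a·|f'(a)|^s·M₂·h₁(ϑ)^{1/q} ]. -/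
open Real MeasureTheory Set intervalIntegral

noncomputable def h₁ (u : ℝ) : ℝ :=
  if u = 1 then 1/2 else (u - Real.log u - 1) / (Real.log u) ^ 2

/-!
Put `L = log b - log a`, `x u = a * exp (u * L / 2)`, `y u = b * exp (-(u * L / 2))`, so that
`x u * y u = a * b` and, as `u` runs over `[0, 1]`, the interval `[x u, y u]` shrinks from `[a, b]`
to the point `√(a * b)`. With `ψ u = f (x u) * f (y u)`, the function
`H u = (1 - u) * ψ u - (1 / L) * ∫ z in x u..y u, f z / z * f (a * b / z)`
satisfies `H' u = (1 - u) * ψ' u` and `H 1 = 0`, while `H 0` is the quantity to be estimated.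

Write `A = a * |f' a| ^ s` and `B = b * |f' b| ^ s`. Since `|f' a|, |f' b| ≤ 1` and `s * l ≤ l ^ s`,
geometric convexity gives `z * |f' z| ≤ A ^ l * B ^ (1 - l)` at `z = a ^ l * b ^ (1 - l)`, hence
`|ψ' u| ≤ (L / 2) * (M₂ * A * √(B / A) ^ u + M₁ * B * √(A / B) ^ u)`. The mean value inequality
then bounds `|H 0|` through `∫ u in 0..1, (1 - u) * v ^ u = h₁ v` (`integral_one_sub_mul_rpow`), and
Jensen's inequality for the weight `2 * (1 - u)` turns `h₁ v` into `h₁ (v ^ q) ^ (1 / q)`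
(`h₁_le_rpow`). If `f' a` or `f' b` vanishes, then `f' = 0` on `(a, b)`, and both sides are `0`.
-/

theorem integral_one_sub_mul_rpow {v : ℝ} (hv : 0 < v) :
    ∫ u in (0:ℝ)..1, (1 - u) * v ^ u = h₁ v := by
  unfold h₁
  split_ifs with h
  · subst h
    simp only [one_rpow, mul_one]
    rw [intervalIntegral.integral_sub (by simp) (by simp)]
    simp
    norm_num
  · have hc : Real.log v ≠ 0 := Real.log_ne_zero_of_pos_of_ne_one hv h
    set c := Real.log v with hcdef
    have key : ∀ u ∈ Set.uIcc (0:ℝ) 1, HasDerivAt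
        (fun u : ℝ => ((1 - u) / c + 1 / c ^ 2) * Real.exp (c * u)) ((1 - u) * v ^ u) u := by
      intro u _
      have h1 : HasDerivAt (fun u : ℝ => (1 - u) / c + 1 / c ^ 2) (-1 / c) u :=
        (((hasDerivAt_id u).const_sub 1).div_const c).add_const _
      have h2 : HasDerivAt (fun u : ℝ => Real.exp (c * u)) (Real.exp (c * u) * c) u := by
        simpa using ((hasDerivAt_id u).const_mul c).exp
      refine (h1.mul h2).congr_deriv ?_
      rw [Real.rpow_def_of_pos hv, ← hcdef]
      field_simp
      ring
    rw [intervalIntegral.integral_eq_sub_of_hasDerivAt key]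
    · simp only [mul_one, mul_zero, Real.exp_zero, hcdef, Real.exp_log hv]
      field_simp
      ring
    · exact (Continuous.mul (by fun_prop) (Real.continuous_const_rpow hv.ne')).intervalIntegrable _ _

theorem h₁_pos {v : ℝ} (hv : 0 < v) : 0 < h₁ v := by
  unfold h₁
  split_ifs with h
  · norm_num
  · have hc : Real.log v ≠ 0 := Real.log_ne_zero_of_pos_of_ne_one hv h
    have := Real.log_lt_sub_one_of_pos hv h
    have : 0 < v - Real.log v - 1 := by linarith
    positivity

/-- Jensen's inequality for `x ↦ x ^ q` and the probability weight `2 * (1 - u)` on `[0, 1]`. -/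
theorem h₁_le_rpow {v q : ℝ} (hv : 0 < v) (hq : 1 ≤ q) :
    h₁ v ≤ (1/2 : ℝ) ^ (1 - 1 / q) * h₁ (v ^ q) ^ (1 / q) := by
  have hq0 : 0 < q := by linarith
  have hvq : 0 < v ^ q := by positivity
  set m := 2 * h₁ v with hm
  have hmpos : 0 < m := by have := h₁_pos hv; positivity
  have hcv : Continuous fun u : ℝ => (1 - u) * v ^ u :=
    Continuous.mul (by fun_prop) (Real.continuous_const_rpow hv.ne')
  have hcvq : Continuous fun u : ℝ => (1 - u) * (v ^ q) ^ u :=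
    Continuous.mul (by fun_prop) (Real.continuous_const_rpow hvq.ne')
  -- the tangent line of `x ↦ x ^ q` at the mean `m`
  have tangent : ∀ u ∈ Set.Icc (0:ℝ) 1,
      (1 - u) * (m ^ q * (1 - q)) + m ^ q * q / m * ((1 - u) * v ^ u) ≤ (1 - u) * (v ^ q) ^ u := by
    intro u hu
    have hvu : 0 < v ^ u := by positivity
    have h := one_add_mul_self_le_rpow_one_add (s := v ^ u / m - 1)
      (by have : 0 < v ^ u / m := by positivity
          linarith) hq
    rw [add_sub_cancel, Real.div_rpow hvu.le hmpos.le, le_div_iff₀ (by positivity),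
      ← Real.rpow_mul hv.le, mul_comm u q, Real.rpow_mul hv.le] at h
    have h1u : 0 ≤ 1 - u := by linarith [hu.2]
    calc _ = (1 - u) * ((1 + q * (v ^ u / m - 1)) * m ^ q) := by field_simp; ring
      _ ≤ _ := by gcongr
  have h0 : IntervalIntegrable (fun u : ℝ => (1 - u) * (m ^ q * (1 - q))) volume 0 1 :=
    Continuous.intervalIntegrable (by fun_prop) _ _
  have h1 : IntervalIntegrable (fun u : ℝ => m ^ q * q / m * ((1 - u) * v ^ u)) volume 0 1 :=
    (hcv.const_mul _).intervalIntegrable _ _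
  have hI := intervalIntegral.integral_mono_on (by norm_num : (0:ℝ) ≤ 1) (h0.add h1)
    (hcvq.intervalIntegrable _ _) tangent
  have hone : ∫ u in (0:ℝ)..1, (1 - u) = 1 / 2 := by
    rw [intervalIntegral.integral_sub (by simp) (by simp)]
    simp
    norm_num
  rw [intervalIntegral.integral_add h0 h1, intervalIntegral.integral_mul_const,
    intervalIntegral.integral_const_mul, integral_one_sub_mul_rpow hv,
    integral_one_sub_mul_rpow hvq, hone] at hI
  have hmq : m ^ q ≤ 2 * h₁ (v ^ q) := by
    have e : 1 / 2 * (m ^ q * (1 - q)) + m ^ q * q / m * h₁ v = m ^ q / 2 := by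
      have : h₁ v = m / 2 := by rw [hm]; ring
      rw [this]; field_simp; ring
    linarith
  have hpos := h₁_pos hvq
  have hle : m ≤ 2 ^ (1 / q) * h₁ (v ^ q) ^ (1 / q) := by
    rw [← Real.mul_rpow (by norm_num) hpos.le, one_div]
    exact (Real.le_rpow_inv_iff_of_pos hmpos.le (by positivity) hq0).2 hmq
  have e2 : (1/2 : ℝ) ^ (1 - 1 / q) = 1 / 2 * 2 ^ (1 / q) := by
    rw [Real.rpow_sub (by norm_num), Real.rpow_one, one_div (2:ℝ), Real.inv_rpow (by norm_num),
      div_inv_eq_mul]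
  rw [e2]
  have : h₁ v = m / 2 := by rw [hm]; ring
  linarith

/-- If the endpoint values `α`, `β` are at most one, the `s`-geometric convexity bound for `w ^ q`
bounds `w` by a function log-linear in `l`, because `s * l ≤ l ^ s`. -/
theorem abs_le_of_geomConvex {w α β q s l : ℝ} (hα : 0 < α) (hα1 : α ≤ 1) (hβ : 0 < β)
    (hβ1 : β ≤ 1) (hw : 0 ≤ w) (hq : 1 ≤ q) (hs : s ∈ Set.Ioc (0:ℝ) 1) (hl : l ∈ Set.Icc (0:ℝ) 1)
    (h : w ^ q ≤ (α ^ q) ^ (l ^ s) * (β ^ q) ^ ((1 - l) ^ s)) :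
    w ≤ (α ^ s) ^ l * (β ^ s) ^ (1 - l) := by
  have hq0 : 0 < q := by linarith
  have aux : ∀ t ∈ Set.Icc (0:ℝ) 1, s * t ≤ t ^ s := by
    intro t ht
    have h1 : s * t ≤ 1 * t := mul_le_mul_of_nonneg_right hs.2 ht.1
    have h2 : t ≤ t ^ s := Real.self_le_rpow_of_le_one ht.1 ht.2 hs.2
    linarith
  have h1 : w ≤ α ^ (l ^ s) * β ^ ((1 - l) ^ s) := by
    rw [← Real.rpow_mul hα.le, ← Real.rpow_mul hβ.le, mul_comm q, mul_comm q, Real.rpow_mul hα.le,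
      Real.rpow_mul hβ.le, ← Real.mul_rpow (by positivity) (by positivity)] at h
    exact (Real.rpow_le_rpow_iff hw (by positivity) hq0).1 h
  rw [← Real.rpow_mul hα.le, ← Real.rpow_mul hβ.le]
  refine h1.trans ?_
  gcongr ?_ * ?_
  · exact Real.rpow_le_rpow_of_exponent_ge hα hα1 (aux l hl)
  · exact Real.rpow_le_rpow_of_exponent_ge hβ hβ1 (aux (1 - l) ⟨by linarith [hl.2], by linarith [hl.1]⟩)

theorem stmt_2 (I : Set ℝ) (hI : I ⊆ Set.Ioi (0:ℝ)) (hI' : I.OrdConnected)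
    (f f' : ℝ → ℝ) (a b : ℝ) (ha : a ∈ interior I) (hb : b ∈ interior I) (hab : a < b)
    (hf : ∀ x ∈ interior I, HasDerivAt f (f' x) x)
    (hint : IntervalIntegrable f' volume a b)
    (hpos : ∀ x ∈ I, 0 < f x)
    (q s : ℝ) (hq : 1 ≤ q) (hs : s ∈ Set.Ioc (0:ℝ) 1)
    (hconv : ∀ x ∈ Set.Icc a b, ∀ y ∈ Set.Icc a b, ∀ l ∈ Set.Icc (0:ℝ) 1,
      |f' (x ^ l * y ^ (1 - l))| ^ q ≤ (|f' x| ^ q) ^ (l ^ s) * (|f' y| ^ q) ^ ((1 - l) ^ s))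
    (M₁ M₂ : ℝ)
    (hM₁ : IsGreatest ((fun x => |f x|) '' Set.Icc a (Real.sqrt (a*b))) M₁)
    (hM₂ : IsGreatest ((fun x => |f x|) '' Set.Icc (Real.sqrt (a*b)) b) M₂)
    (hfa : |f' a| ≤ 1) (hfb : |f' b| ≤ 1) :
    |f a * f b - (1 / (Real.log b - Real.log a)) * ∫ x in a..b, (f x / x) * f (a * b / x)|
      ≤ Real.log (b / a) * ((1:ℝ) / 2) ^ (2 - 1 / q) *
        (b * |f' b| ^ s * M₁ * (h₁ ((a * |f' a| ^ s / (b * |f' b| ^ s)) ^ (q / 2))) ^ (1 / q)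
          + a * |f' a| ^ s * M₂ * (h₁ ((b * |f' b| ^ s / (a * |f' a| ^ s)) ^ (q / 2))) ^ (1 / q)) := by
  have ha0 : 0 < a := hI (interior_subset ha)
  have hb0 : 0 < b := hI (interior_subset hb)
  have hq0 : 0 < q := by linarith
  have hs0 : s ≠ 0 := hs.1.ne'
  set L := Real.log b - Real.log a with hL
  have hL0 : 0 < L := sub_pos.2 (Real.log_lt_log ha0 hab)
  have hLdiv : Real.log (b / a) = L := Real.log_div hb0.ne' ha0.ne'
  rw [hLdiv]
  have hsub : Set.Icc a b ⊆ interior I := hI'.interior.out ha hb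
  set x : ℝ → ℝ := fun u => a * Real.exp (u * L / 2) with hx
  set y : ℝ → ℝ := fun u => b * Real.exp (-(u * L / 2)) with hy
  have hx0 : ∀ u, 0 < x u := fun u => by positivity
  have hy0 : ∀ u, 0 < y u := fun u => by positivity
  have hxy : ∀ u, x u * y u = a * b := by
    intro u
    simp only [hx, hy]
    rw [Real.exp_neg]; field_simp
  have hxrpow : ∀ u, x u = a ^ (1 - u / 2) * b ^ (1 - (1 - u / 2)) := by
    intro u
    simp only [hx]
    rw [Real.rpow_def_of_pos ha0, Real.rpow_def_of_pos hb0, ← Real.exp_add]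
    nth_rw 1 [← Real.exp_log ha0]
    rw [← Real.exp_add]; congr 1; rw [hL]; ring
  have hyrpow : ∀ u, y u = a ^ (u / 2) * b ^ (1 - u / 2) := by
    intro u
    simp only [hy]
    rw [Real.rpow_def_of_pos ha0, Real.rpow_def_of_pos hb0, ← Real.exp_add]
    nth_rw 1 [← Real.exp_log hb0]
    rw [← Real.exp_add]; congr 1; rw [hL]; ring
  have hx_zero : x 0 = a := by simp [hx]
  have hy_zero : y 0 = b := by simp [hy]
  have hxy_one : x 1 = y 1 := by
    rw [hxrpow, hyrpow]; norm_num
  have hx_one : x 1 = √(a * b) := by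
    rw [← hxy 1, ← hxy_one, Real.sqrt_mul_self (hx0 1).le]
  have hx_mono : StrictMono x := by
    intro u v huv
    simp only [hx]
    gcongr
  have hy_anti : StrictAnti y := by
    intro u v huv
    simp only [hy]
    gcongr
  have hx_mem : ∀ u ∈ Set.Icc (0:ℝ) 1, x u ∈ Set.Icc a √(a * b) := fun u hu =>
    ⟨hx_zero ▸ hx_mono.monotone hu.1, hx_one ▸ hx_mono.monotone hu.2⟩
  have hy_mem : ∀ u ∈ Set.Icc (0:ℝ) 1, y u ∈ Set.Icc √(a * b) b := fun u hu =>
    ⟨hx_one ▸ hxy_one ▸ hy_anti.antitone hu.2, hy_zero ▸ hy_anti.antitone hu.1⟩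
  have hsa : a ≤ √(a * b) := (hx_mem 1 (by simp)).1.trans (hx_mem 1 (by simp)).2
  have hsb : √(a * b) ≤ b := (hy_mem 1 (by simp)).1.trans (hy_mem 1 (by simp)).2
  have hx_mem' : ∀ u ∈ Set.Icc (0:ℝ) 1, x u ∈ Set.Icc a b := fun u hu =>
    ⟨(hx_mem u hu).1, (hx_mem u hu).2.trans hsb⟩
  have hy_mem' : ∀ u ∈ Set.Icc (0:ℝ) 1, y u ∈ Set.Icc a b := fun u hu =>
    ⟨hsa.trans (hy_mem u hu).1, (hy_mem u hu).2⟩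
  have hx_deriv : ∀ u, HasDerivAt x (x u * (L / 2)) u := by
    intro u
    have := ((((hasDerivAt_id u).mul_const L).div_const 2).exp).const_mul a
    refine this.congr_deriv ?_
    simp [hx]; ring
  have hy_deriv : ∀ u, HasDerivAt y (-(y u * (L / 2))) u := by
    intro u
    have := (((((hasDerivAt_id u).mul_const L).div_const 2).neg).exp).const_mul b
    refine this.congr_deriv ?_
    simp [hy]; ring
  set k : ℝ → ℝ := fun z => (f z / z) * f (a * b / z) with hk
  have hfc : ∀ z ∈ Set.Icc a b, ContinuousAt f z := fun z hz => (hf z (hsub hz)).continuousAt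
  have hinv : ∀ z ∈ Set.Icc a b, a * b / z ∈ Set.Icc a b := by
    intro z hz
    have hz0 : 0 < z := ha0.trans_le hz.1
    constructor
    · rw [le_div_iff₀ hz0]; nlinarith [hz.2]
    · rw [div_le_iff₀ hz0]; nlinarith [hz.1]
  have hkc : ∀ z ∈ Set.Icc a b, ContinuousAt k z := by
    intro z hz
    have hz0 : 0 < z := ha0.trans_le hz.1
    refine ((hfc z hz).div continuousAt_id hz0.ne').mul ?_
    exact ContinuousAt.comp (f := fun z => a * b / z) (g := f) (hfc _ (hinv z hz))
      (continuousAt_const.div continuousAt_id hz0.ne')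
  -- continuity in a neighbourhood gives the measurability the differentiated integral needs
  have hkc' : ∀ z ∈ Set.Icc a b, StronglyMeasurableAtFilter k (nhds z) := by
    have hopen : IsOpen (interior I ∩ (fun z => a * b / z) ⁻¹' interior I ∩ Set.Ioi 0) := by
      have : ContinuousOn (fun z : ℝ => a * b / z) (Set.Ioi 0) :=
        continuousOn_const.div continuousOn_id fun z hz => (ne_of_gt hz)
      have h2 := this.isOpen_inter_preimage isOpen_Ioi (isOpen_interior (s := I))
      have h3 := (isOpen_interior (s := I)).inter h2
      convert h3 using 1
      ext z; simp only [Set.mem_inter_iff]; tauto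
    intro z hz
    refine ContinuousOn.stronglyMeasurableAtFilter hopen ?_ z
      ⟨⟨hsub hz, hsub (hinv z hz)⟩, ha0.trans_le hz.1⟩
    rintro w ⟨⟨hw1, hw2⟩, hw3⟩
    refine ContinuousAt.continuousWithinAt ?_
    refine ((hf w hw1).continuousAt.div continuousAt_id (ne_of_gt hw3)).mul ?_
    exact ContinuousAt.comp (f := fun z => a * b / z) (g := f) (hf _ hw2).continuousAt
      (continuousAt_const.div continuousAt_id (ne_of_gt hw3))
  have hkint : ∀ z ∈ Set.Icc a b, IntervalIntegrable k volume a z := by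
    intro z hz
    refine ContinuousOn.intervalIntegrable ?_
    rw [Set.uIcc_of_le hz.1]
    exact fun w hw => (hkc w ⟨hw.1, hw.2.trans hz.2⟩).continuousWithinAt
  have hK : ∀ z ∈ Set.Icc a b, HasDerivAt (fun z => ∫ t in a..z, k t) (k z) z := fun z hz =>
    intervalIntegral.integral_hasDerivAt_right (hkint z hz) (hkc' z hz) (hkc z hz)
  set K : ℝ → ℝ := fun z => ∫ t in a..z, k t with hKdef
  set ψ : ℝ → ℝ := fun u => f (x u) * f (y u) with hψ
  set ψ' : ℝ → ℝ := fun u =>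
    f' (x u) * (x u * (L / 2)) * f (y u) + f (x u) * (f' (y u) * -(y u * (L / 2))) with hψ'
  have hψd : ∀ u ∈ Set.Icc (0:ℝ) 1, HasDerivAt ψ (ψ' u) u := fun u hu =>
    ((hf _ (hsub (hx_mem' u hu))).comp u (hx_deriv u)).mul
      ((hf _ (hsub (hy_mem' u hu))).comp u (hy_deriv u))
  set H : ℝ → ℝ := fun u => (1 - u) * ψ u - (1 / L) * (K (y u) - K (x u)) with hH
  have hHd : ∀ u ∈ Set.Icc (0:ℝ) 1, HasDerivAt H ((1 - u) * ψ' u) u := by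
    intro u hu
    have h1 := ((hasDerivAt_id u).const_sub 1).mul (hψd u hu)
    have h2 := (((hK _ (hy_mem' u hu)).comp u (hy_deriv u)).sub
      ((hK _ (hx_mem' u hu)).comp u (hx_deriv u))).const_mul (1 / L)
    refine (h1.sub h2).congr_deriv ?_
    have e1 : a * b / y u = x u := by rw [← hxy u, mul_div_cancel_right₀ _ (hy0 u).ne']
    have e2 : a * b / x u = y u := by rw [← hxy u, mul_div_cancel_left₀ _ (hx0 u).ne']
    simp only [hk, e1, e2, hψ, id]
    have := hx0 u
    have := hy0 u
    field_simp
    ring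
  have hH0 : H 0 = f a * f b - 1 / L * ∫ z in a..b, k z := by
    simp [hH, hψ, hKdef, hx_zero, hy_zero]
  have hH1 : H 1 = 0 := by
    simp [hH, hxy_one]
  rw [← hH0]
  have hHc : ContinuousOn H (Set.Icc 0 1) := fun u hu => (hHd u hu).continuousAt.continuousWithinAt
  have hmem_a : a ∈ Set.Icc a b := ⟨le_rfl, hab.le⟩
  have hmem_b : b ∈ Set.Icc a b := ⟨hab.le, le_rfl⟩
  have hlx : ∀ u ∈ Set.Icc (0:ℝ) 1, 1 - u / 2 ∈ Set.Icc (0:ℝ) 1 := fun u hu =>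
    ⟨by linarith [hu.2], by linarith [hu.1]⟩
  have hly : ∀ u ∈ Set.Icc (0:ℝ) 1, u / 2 ∈ Set.Icc (0:ℝ) 1 := fun u hu =>
    ⟨by linarith [hu.1], by linarith [hu.2]⟩
  by_cases hz : f' a = 0 ∨ f' b = 0
  · have hvan : ∀ l ∈ Set.Ioo (0:ℝ) 1, f' (a ^ l * b ^ (1 - l)) = 0 := by
      intro l hl
      have h := hconv a hmem_a b hmem_b l ⟨hl.1.le, hl.2.le⟩
      have h0 : (|f' a| ^ q) ^ (l ^ s) * (|f' b| ^ q) ^ ((1 - l) ^ s) = 0 := by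
        have hl1 : 0 < l ^ s := Real.rpow_pos_of_pos hl.1 _
        have hl2 : 0 < (1 - l) ^ s := Real.rpow_pos_of_pos (by linarith [hl.2]) _
        rcases hz with hz | hz
        · rw [hz, abs_zero, Real.zero_rpow hq0.ne', Real.zero_rpow hl1.ne', zero_mul]
        · rw [hz, abs_zero, Real.zero_rpow hq0.ne', Real.zero_rpow hl2.ne', mul_zero]
      rw [h0] at h
      by_contra hne
      have : 0 < |f' (a ^ l * b ^ (1 - l))| ^ q := Real.rpow_pos_of_pos (abs_pos.2 hne) _
      linarith
    obtain ⟨c, hc, hceq⟩ := exists_hasDerivAt_eq_slope H (fun u => (1 - u) * ψ' u)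
      (by norm_num : (0:ℝ) < 1) hHc (fun u hu => hHd u ⟨hu.1.le, hu.2.le⟩)
    have hcx : f' (x c) = 0 := by
      rw [hxrpow]; exact hvan _ ⟨by linarith [hc.2], by linarith [hc.1]⟩
    have hcy : f' (y c) = 0 := by
      rw [hyrpow]; exact hvan _ ⟨by linarith [hc.1], by linarith [hc.2]⟩
    have hH00 : H 0 = 0 := by
      simp only [hψ', hcx, hcy, hH1] at hceq
      norm_num at hceq
      exact hceq
    -- both arguments of `h₁` are `0`, by the conventions `0 / B = B / 0 = 0`, and `h₁ 0 = 0`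
    have h10 : h₁ 0 = 0 := by simp [h₁]
    have hq2 : q / 2 ≠ 0 := by positivity
    have hq1 : 1 / q ≠ 0 := by positivity
    rw [hH00]
    rcases hz with hz | hz <;>
      simp [hz, Real.zero_rpow hs0, Real.zero_rpow hq2, h10, Real.zero_rpow (inv_ne_zero hq0.ne')]
  · push Not at hz
    obtain ⟨hza, hzb⟩ := hz
    have hα : 0 < |f' a| := abs_pos.2 hza
    have hβ : 0 < |f' b| := abs_pos.2 hzb
    set A := a * |f' a| ^ s with hA
    set B := b * |f' b| ^ s with hB
    have hA0 : 0 < A := by positivity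
    have hB0 : 0 < B := by positivity
    have hbound : ∀ l ∈ Set.Icc (0:ℝ) 1,
        a ^ l * b ^ (1 - l) * |f' (a ^ l * b ^ (1 - l))| ≤ A ^ l * B ^ (1 - l) := by
      intro l hl
      have h := abs_le_of_geomConvex hα hfa hβ hfb (abs_nonneg _) hq hs hl
        (hconv a hmem_a b hmem_b l hl)
      rw [hA, hB, Real.mul_rpow ha0.le (by positivity), Real.mul_rpow hb0.le (by positivity)]
      calc _ ≤ a ^ l * b ^ (1 - l) * ((|f' a| ^ s) ^ l * (|f' b| ^ s) ^ (1 - l)) := by gcongr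
        _ = _ := by ring
    have hsqrt : ∀ C D : ℝ, 0 < C → 0 < D → ∀ u : ℝ,
        C ^ (1 - u / 2) * D ^ (u / 2) = C * ((D / C) ^ (1 / 2 : ℝ)) ^ u := by
      intro C D hC hD u
      rw [← Real.rpow_mul (by positivity), Real.div_rpow hD.le hC.le, Real.rpow_sub hC,
        Real.rpow_one, show (1 / 2 : ℝ) * u = u / 2 by ring]
      field_simp
    set p := (B / A) ^ (1 / 2 : ℝ) with hp
    set r := (A / B) ^ (1 / 2 : ℝ) with hr
    have hp0 : 0 < p := by positivity
    have hr0 : 0 < r := by positivity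
    have hbx : ∀ u ∈ Set.Icc (0:ℝ) 1, x u * |f' (x u)| ≤ A * p ^ u := by
      intro u hu
      have h := hbound _ (hlx u hu)
      rw [← hxrpow, show 1 - (1 - u / 2) = u / 2 by ring, hsqrt A B hA0 hB0] at h
      exact h
    have hby : ∀ u ∈ Set.Icc (0:ℝ) 1, y u * |f' (y u)| ≤ B * r ^ u := by
      intro u hu
      have h := hbound _ (hly u hu)
      rw [← hyrpow, mul_comm (A ^ _), hsqrt B A hB0 hA0] at h
      exact h
    have hfx : ∀ u ∈ Set.Icc (0:ℝ) 1, |f (x u)| ≤ M₁ := fun u hu =>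
      hM₁.2 ⟨x u, hx_mem u hu, rfl⟩
    have hfy : ∀ u ∈ Set.Icc (0:ℝ) 1, |f (y u)| ≤ M₂ := fun u hu =>
      hM₂.2 ⟨y u, hy_mem u hu, rfl⟩
    have hM₁0 : 0 ≤ M₁ := (abs_nonneg _).trans (hfx 0 (by simp))
    have hM₂0 : 0 ≤ M₂ := (abs_nonneg _).trans (hfy 0 (by simp))
    set g : ℝ → ℝ := fun u =>
      L / 2 * (A * M₂) * ((1 - u) * p ^ u) + L / 2 * (B * M₁) * ((1 - u) * r ^ u) with hg
    have hcp : Continuous fun u : ℝ => L / 2 * (A * M₂) * ((1 - u) * p ^ u) :=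
      continuous_const.mul (Continuous.mul (by fun_prop) (Real.continuous_const_rpow hp0.ne'))
    have hcr : Continuous fun u : ℝ => L / 2 * (B * M₁) * ((1 - u) * r ^ u) :=
      continuous_const.mul (Continuous.mul (by fun_prop) (Real.continuous_const_rpow hr0.ne'))
    have hgc : Continuous g := hcp.add hcr
    have hgbound : ∀ u ∈ Set.Icc (0:ℝ) 1, |(1 - u) * ψ' u| ≤ g u := by
      intro u hu
      have h1u : 0 ≤ 1 - u := by linarith [hu.2]
      have hX := hx0 u
      have hY := hy0 u
      rw [abs_mul, abs_of_nonneg h1u]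
      have h1 : |ψ' u| ≤ L / 2 * ((x u * |f' (x u)|) * |f (y u)|)
          + L / 2 * ((y u * |f' (y u)|) * |f (x u)|) := by
        refine (abs_add_le _ _).trans (le_of_eq ?_)
        simp only [abs_mul, abs_neg, abs_of_pos hX, abs_of_pos hY,
          abs_of_pos (half_pos hL0)]
        ring
      have h2 : (x u * |f' (x u)|) * |f (y u)| ≤ (A * p ^ u) * M₂ :=
        mul_le_mul (hbx u hu) (hfy u hu) (abs_nonneg _) (by positivity)
      have h3 : (y u * |f' (y u)|) * |f (x u)| ≤ (B * r ^ u) * M₁ :=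
        mul_le_mul (hby u hu) (hfx u hu) (abs_nonneg _) (by positivity)
      calc (1 - u) * |ψ' u| ≤ (1 - u) * (L / 2 * ((A * p ^ u) * M₂) + L / 2 * ((B * r ^ u) * M₁)) := by
            refine mul_le_mul_of_nonneg_left (h1.trans ?_) h1u
            gcongr
        _ = g u := by simp only [hg]; ring
    have hGd : ∀ u, HasDerivAt (fun u => ∫ t in (0:ℝ)..u, g t) (g u) u := fun u =>
      hgc.integral_hasStrictDerivAt 0 u |>.hasDerivAt
    have hmain : ‖H 1 - H 0‖ ≤ ∫ t in (0:ℝ)..1, g t :=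
      image_norm_le_of_norm_deriv_right_le_deriv_boundary
        (f := fun u => H u - H 0) (f' := fun u => (1 - u) * ψ' u)
        (B := fun u => ∫ t in (0:ℝ)..u, g t) (B' := g) (a := 0) (b := 1)
        (hHc.sub continuousOn_const)
        (fun u hu => ((hHd u ⟨hu.1, hu.2.le⟩).sub_const _).hasDerivWithinAt)
        (by simp) hGd
        (fun u hu => hgbound u ⟨hu.1, hu.2.le⟩) (by simp)
    rw [hH1, zero_sub, norm_neg, Real.norm_eq_abs,
      intervalIntegral.integral_add (hcp.intervalIntegrable _ _) (hcr.intervalIntegrable _ _),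
      intervalIntegral.integral_const_mul, intervalIntegral.integral_const_mul,
      integral_one_sub_mul_rpow hp0, integral_one_sub_mul_rpow hr0] at hmain
    have hpq : p ^ q = (B / A) ^ (q / 2) := by
      rw [hp, ← Real.rpow_mul (by positivity)]; congr 1; ring
    have hrq : r ^ q = (A / B) ^ (q / 2) := by
      rw [hr, ← Real.rpow_mul (by positivity)]; congr 1; ring
    have hhalf : (1 / 2 : ℝ) ^ (2 - 1 / q) = 1 / 2 * (1 / 2 : ℝ) ^ (1 - 1 / q) := by
      rw [show (2 - 1 / q) = 1 + (1 - 1 / q) by ring, Real.rpow_add (by norm_num), Real.rpow_one]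
    rw [← hpq, ← hrq, hhalf]
    calc |H 0| ≤ _ := hmain
      _ ≤ L / 2 * (A * M₂) * ((1/2 : ℝ) ^ (1 - 1 / q) * h₁ (p ^ q) ^ (1 / q))
          + L / 2 * (B * M₁) * ((1/2 : ℝ) ^ (1 - 1 / q) * h₁ (r ^ q) ^ (1 / q)) := by
        gcongr
        · exact h₁_le_rpow hp0 hq
        · exact h₁_le_rpow hr0 hq
      _ = _ := by ring
end

section
/- Let f : I ⊆ (0,∞) → (0,∞) be differentiable on I°, a, b ∈ I° with a < b, f' integrable on [a,b], and let |f'|^q be s-geometrically convex on [a,b] for some q ≥ 1 and s ∈ (0,1]. If |f'(a)| ≥ 1 and |f'(b)| ≥ 1, then |f(a)f(b) − (1/(ln b − ln a)) ∫_a^b (f(x)/x)·f(ab/x) dx| ≤ ln(b/a)·(1/2)^{2−1/q}·[ b·|f'(b)|·|f'(a)|^{1−s}·M₁·h₁(θ)^{1/q} + a·|f'(a)|·|f'(b)|^{1−s}·M₂·h₁(ϑ)^{1/q} ]. -/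
/-!
In the logarithmic variable `x = exp (p + k * u)`, with `p = (log a + log b) / 2` and
`k = (log b - log a) / 2`, the function `g u = f (exp (p + k * u)) * f (exp (p - k * u))` is even,
`g 1 = f a * f b`, and the normalised integral equals `∫ u in 0..1, g u`. Integrating by parts, the
difference is `∫ u in 0..1, u * g' u`, where `g'` is a sum of two terms `k * x * f' x * f (a * b / x)`
with `x` on one side of `√(a * b)` and `a * b / x` on the other, so that the undifferentiated factor
is at most `M₁` or `M₂`. The `s`-geometric convexity and Bernoulli's inequality bound `x * |f' x|`
by an exponential in `u` (`point_bound`), and the power-mean inequality with weight `u`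
(`power_mean`) together with `∫ u in 0..1, u * T ^ (1 - u) = h₁ T` gives the claim. The integration
by parts is phrased as a mean value inequality (`trapezoid_bound`).
-/

open Real MeasureTheory Set intervalIntegral

/-! ### Pointwise and power-mean estimates -/

/-- Pointwise estimate behind the bound: for bases `X, Y ≥ 1` the exponents `l ^ s`, `(1 - l) ^ s`
may be linearised by Bernoulli's inequality `l ^ s ≤ s * l + (1 - s)`, after which the right-hand
side is purely exponential in `l`. -/
lemma point_bound {x y X Y D q s l : ℝ} (hx : 0 < x) (hy : 0 < y) (hX : 1 ≤ X) (hY : 1 ≤ Y)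
    (hD : 0 ≤ D) (hq : 1 ≤ q) (hs0 : 0 < s) (hs1 : s ≤ 1) (hl0 : 0 ≤ l) (hl1 : l ≤ 1)
    (h : D ^ q ≤ (X ^ q) ^ (l ^ s) * (Y ^ q) ^ ((1 - l) ^ s)) :
    x ^ l * y ^ (1 - l) * D ≤ y * Y * X ^ (1 - s) * (x * X ^ s / (y * Y ^ s)) ^ l := by
  have hX0 : 0 < X := by linarith
  have hY0 : 0 < Y := by linarith
  have bern : ∀ m : ℝ, 0 ≤ m → m ^ s ≤ s * m + (1 - s) := by
    intro m hm
    have := rpow_one_add_le_one_add_mul_self (s := m - 1) (by linarith) hs0.le hs1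
    have e : 1 + (m - 1) = m := by ring
    rw [e] at this
    linarith
  have h1 : D ≤ X ^ (l ^ s) * Y ^ ((1 - l) ^ s) := by
    have e : (X ^ q) ^ (l ^ s) * (Y ^ q) ^ ((1 - l) ^ s)
        = (X ^ (l ^ s) * Y ^ ((1 - l) ^ s)) ^ q := by
      rw [Real.mul_rpow (by positivity) (by positivity), ← Real.rpow_mul hX0.le,
        ← Real.rpow_mul hX0.le, ← Real.rpow_mul hY0.le, ← Real.rpow_mul hY0.le,
        mul_comm q, mul_comm q]
    rw [e] at h
    exact (Real.rpow_le_rpow_iff hD (by positivity) (by linarith)).1 h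
  have h2 : D ≤ X ^ (s * l + (1 - s)) * Y ^ (s * (1 - l) + (1 - s)) := by
    refine h1.trans ?_
    have e1 := Real.rpow_le_rpow_of_exponent_le hX (bern l hl0)
    have e2 := Real.rpow_le_rpow_of_exponent_le hY (bern (1 - l) (by linarith))
    gcongr
  have h3 : x ^ l * y ^ (1 - l) * D
      ≤ x ^ l * y ^ (1 - l) * (X ^ (s * l + (1 - s)) * Y ^ (s * (1 - l) + (1 - s))) := by
    gcongr
  refine h3.trans (le_of_eq ?_)
  rw [Real.div_rpow (by positivity) (by positivity), Real.mul_rpow hx.le (by positivity),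
    Real.mul_rpow hy.le (by positivity), ← Real.rpow_mul hX0.le, ← Real.rpow_mul hY0.le,
    Real.rpow_add hX0, Real.rpow_sub hy, Real.rpow_one,
    show s * (1 - l) + (1 - s) = 1 - s * l by ring, Real.rpow_sub hY0, Real.rpow_one]
  field_simp

lemma integral_mul_rpow {T : ℝ} (hT : 0 < T) :
    ∫ u in (0:ℝ)..1, u * T ^ (1 - u) = h₁ T := by
  unfold h₁
  split_ifs with h
  · subst h
    simp
  · have hc : Real.log T ≠ 0 := Real.log_ne_zero_of_pos_of_ne_one hT h
    have hd : ∀ u : ℝ, HasDerivAt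
        (fun u : ℝ => -(u / Real.log T + 1 / Real.log T ^ 2) * Real.exp (Real.log T * (1 - u)))
        (u * T ^ (1 - u)) u := by
      intro u
      have e1 : HasDerivAt (fun u : ℝ => Real.exp (Real.log T * (1 - u)))
          (Real.exp (Real.log T * (1 - u)) * (Real.log T * (-1))) u :=
        (((hasDerivAt_id u).const_sub 1).const_mul (Real.log T)).exp
      have e2 : HasDerivAt (fun u : ℝ => -(u / Real.log T + 1 / Real.log T ^ 2))
          (-(1 / Real.log T)) u :=
        (((hasDerivAt_id u).div_const (Real.log T)).add_const _).neg
      refine (e2.mul e1).congr_deriv ?_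
      rw [Real.rpow_def_of_pos hT]
      field_simp
      ring
    rw [intervalIntegral.integral_eq_sub_of_hasDerivAt (fun u _ => hd u)
      (Continuous.intervalIntegrable (by
        have : Continuous fun u : ℝ => T ^ (1 - u) :=
          Continuous.rpow continuous_const (by fun_prop) (fun _ => Or.inl hT.ne')
        fun_prop) _ _)]
    simp [Real.exp_log hT]
    field_simp
    ring

/-- Power-mean inequality for the weight `u` on `[0, 1]`. -/
lemma power_mean {r q : ℝ} (hr : 0 < r) (hq : 1 ≤ q) :
    ∫ u in (0:ℝ)..1, u * r ^ ((1 - u) / 2)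
      ≤ ((1:ℝ) / 2) ^ (1 - 1 / q) * h₁ (r ^ (q / 2)) ^ (1 / q) := by
  have hq0 : 0 < q := by linarith
  set T := r ^ (q / 2) with hTdef
  have hT : 0 < T := by positivity
  have hcr : Continuous fun u : ℝ => r ^ ((1 - u) / 2) :=
    Continuous.rpow continuous_const (by fun_prop) (fun _ => Or.inl hr.ne')
  have hcT : Continuous fun u : ℝ => T ^ (1 - u) :=
    Continuous.rpow continuous_const (by fun_prop) (fun _ => Or.inl hT.ne')
  have hH := integral_mul_rpow hT
  have hHpos : 0 < h₁ T := by
    rw [← hH]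
    refine intervalIntegral.intervalIntegral_pos_of_pos_on
      (Continuous.intervalIntegrable (by fun_prop) _ _) ?_ zero_lt_one
    intro u hu
    have := hu.1
    positivity
  set H := h₁ T with hHdef
  -- `m` is the mean of `T ^ (1 - u)` for the probability weight `2 * u`; Young's inequality is
  -- tangent to `v ↦ v ^ (1 / q)` at this mean, so that integrating it loses nothing.
  set m := 2 * H with hm
  have hm0 : 0 < m := by positivity
  have hq1 : 1 / q ≤ 1 := by rw [div_le_one hq0]; exact hq
  have hq1' : 0 < 1 / q := by positivity
  have young : ∀ u : ℝ, r ^ ((1 - u) / 2)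
      ≤ (1 / q * m ^ (1 / q - 1)) * T ^ (1 - u) + (1 - 1 / q) * m ^ (1 / q) := by
    intro u
    have e : r ^ ((1 - u) / 2) = (T ^ (1 - u)) ^ (1 / q) := by
      rw [hTdef, ← Real.rpow_mul hr.le, ← Real.rpow_mul hr.le]
      congr 1
      field_simp
    have hv : 0 < T ^ (1 - u) := by positivity
    set v := T ^ (1 - u)
    have hb := rpow_one_add_le_one_add_mul_self (s := v / m - 1) (p := 1 / q)
      (by have : 0 < v / m := by positivity
          linarith) hq1'.le hq1
    rw [show 1 + (v / m - 1) = v / m by ring, Real.div_rpow hv.le hm0.le,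
      div_le_iff₀ (by positivity)] at hb
    rw [e, Real.rpow_sub hm0, Real.rpow_one]
    refine hb.trans (le_of_eq ?_)
    field_simp
    ring
  have step : ∫ u in (0:ℝ)..1, u * r ^ ((1 - u) / 2)
      ≤ ∫ u in (0:ℝ)..1, ((1 / q * m ^ (1 / q - 1)) * (u * T ^ (1 - u))
          + (1 - 1 / q) * m ^ (1 / q) * u) := by
    refine intervalIntegral.integral_mono_on zero_le_one
      (Continuous.intervalIntegrable (by fun_prop) _ _)
      (Continuous.intervalIntegrable (by fun_prop) _ _) ?_
    intro u hu
    have := mul_le_mul_of_nonneg_left (young u) hu.1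
    linarith
  refine step.trans (le_of_eq ?_)
  rw [intervalIntegral.integral_add (Continuous.intervalIntegrable (by fun_prop) _ _)
    (Continuous.intervalIntegrable (by fun_prop) _ _), intervalIntegral.integral_const_mul,
    intervalIntegral.integral_const_mul, hH, integral_id, Real.rpow_sub hm0, Real.rpow_one,
    hm, Real.mul_rpow (by norm_num) hHpos.le, Real.rpow_sub (by norm_num), Real.rpow_one,
    Real.div_rpow (by norm_num) (by norm_num), Real.one_rpow]
  field_simp
  ring

/-! ### Integration by parts as a mean value inequality -/

/-- If `g` has derivative `g'` on a neighbourhood `U` of `[0, 1]` and `|g'| ≤ K`, then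
`u * g u - ∫ t in 0..u, g t` has derivative `u * g' u`; the mean value inequality then needs
no integrability of `g'`. -/
lemma trapezoid_bound {g g' K : ℝ → ℝ} {U : Set ℝ} (hU : IsOpen U) (hIU : Icc (0:ℝ) 1 ⊆ U)
    (hg : ∀ u ∈ U, HasDerivAt g (g' u) u) (hK : Continuous K)
    (hb : ∀ u ∈ Icc (0:ℝ) 1, |g' u| ≤ K u) :
    |g 1 - ∫ u in (0:ℝ)..1, g u| ≤ ∫ u in (0:ℝ)..1, u * K u := by
  have hgc : ContinuousOn g U := fun u hu => (hg u hu).continuousAt.continuousWithinAt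
  have hP : ∀ u ∈ Icc (0:ℝ) 1, HasDerivAt (fun u => u * g u - ∫ t in (0:ℝ)..u, g t)
      (u * g' u) u := by
    intro u hu
    have i : IntervalIntegrable g volume 0 u :=
      (hgc.mono (by
        rw [uIcc_of_le hu.1]
        exact (Icc_subset_Icc_right hu.2).trans hIU)).intervalIntegrable
    have d := intervalIntegral.integral_hasDerivAt_right i
      (hgc.stronglyMeasurableAtFilter hU u (hIU hu)) (hg u (hIU hu)).continuousAt
    refine (((hasDerivAt_id u).mul (hg u (hIU hu))).sub d).congr_deriv ?_
    simp
  have hB : ∀ u : ℝ, HasDerivAt (fun u => ∫ t in (0:ℝ)..u, t * K t) (u * K u) u := by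
    intro u
    have hc : Continuous fun t => t * K t := by fun_prop
    exact hc.integral_hasStrictDerivAt 0 u |>.hasDerivAt
  have := image_norm_le_of_norm_deriv_right_le_deriv_boundary
    (a := 0) (b := 1) (f := fun u => u * g u - ∫ t in (0:ℝ)..u, g t) (f' := fun u => u * g' u)
    (B := fun u => ∫ t in (0:ℝ)..u, t * K t) (B' := fun u => u * K u)
    (fun u hu => (hP u hu).continuousAt.continuousWithinAt)
    (fun u hu => (hP u (Ico_subset_Icc_self hu)).hasDerivWithinAt)
    (by simp) hB
    (fun u hu => by
      rw [Real.norm_eq_abs, abs_mul, abs_of_nonneg hu.1]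
      exact mul_le_mul_of_nonneg_left (hb u (Ico_subset_Icc_self hu)) hu.1)
    (right_mem_Icc.2 zero_le_one)
  simpa [Real.norm_eq_abs] using this

/-! ### The Hermite–Hadamard type bound -/

theorem stmt_3 (I : Set ℝ) (hI : I ⊆ Set.Ioi (0:ℝ)) (hI' : I.OrdConnected)
    (f f' : ℝ → ℝ) (a b : ℝ) (ha : a ∈ interior I) (hb : b ∈ interior I) (hab : a < b)
    (hf : ∀ x ∈ interior I, HasDerivAt f (f' x) x)
    (hint : IntervalIntegrable f' volume a b)
    (hpos : ∀ x ∈ I, 0 < f x)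
    (q s : ℝ) (hq : 1 ≤ q) (hs : s ∈ Set.Ioc (0:ℝ) 1)
    (hconv : ∀ x ∈ Set.Icc a b, ∀ y ∈ Set.Icc a b, ∀ l ∈ Set.Icc (0:ℝ) 1,
      |f' (x ^ l * y ^ (1 - l))| ^ q ≤ (|f' x| ^ q) ^ (l ^ s) * (|f' y| ^ q) ^ ((1 - l) ^ s))
    (M₁ M₂ : ℝ)
    (hM₁ : IsGreatest ((fun x => |f x|) '' Set.Icc a (Real.sqrt (a*b))) M₁)
    (hM₂ : IsGreatest ((fun x => |f x|) '' Set.Icc (Real.sqrt (a*b)) b) M₂)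
    (hfa : 1 ≤ |f' a|) (hfb : 1 ≤ |f' b|) :
    |f a * f b - (1 / (Real.log b - Real.log a)) * ∫ x in a..b, (f x / x) * f (a * b / x)|
      ≤ Real.log (b / a) * ((1:ℝ) / 2) ^ (2 - 1 / q) *
        (b * |f' b| * |f' a| ^ (1 - s) * M₁ * (h₁ ((a * |f' a| ^ s / (b * |f' b| ^ s)) ^ (q / 2))) ^ (1 / q)
          + a * |f' a| * |f' b| ^ (1 - s) * M₂ * (h₁ ((b * |f' b| ^ s / (a * |f' a| ^ s)) ^ (q / 2))) ^ (1 / q)) := by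
  have haI := hI (interior_subset ha)
  have hbI := hI (interior_subset hb)
  have ha0 : 0 < a := haI
  have hb0 : 0 < b := hbI
  obtain ⟨hs0, hs1⟩ := hs
  have hq0 : 0 < q := by linarith
  have hlog : Real.log a < Real.log b := Real.log_lt_log ha0 hab
  set p := (Real.log a + Real.log b) / 2 with hp
  set k := (Real.log b - Real.log a) / 2 with hk
  have hk0 : 0 < k := by rw [hk]; linarith
  have hea : Real.exp (p - k) = a := by
    rw [show p - k = Real.log a by rw [hp, hk]; ring, Real.exp_log ha0]
  have heb : Real.exp (p + k) = b := by
    rw [show p + k = Real.log b by rw [hp, hk]; ring, Real.exp_log hb0]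
  have hab2 : a * b = Real.exp p * Real.exp p := by
    rw [← hea, ← heb, ← Real.exp_add, ← Real.exp_add]; congr 1; ring
  have hsq : Real.sqrt (a * b) = Real.exp p := by
    rw [hab2, Real.sqrt_mul_self (Real.exp_pos p).le]
  have hsub : Icc a b ⊆ interior I := hI'.interior.out ha hb
  have hmem : ∀ u ∈ Icc (-1:ℝ) 1, Real.exp (p + k * u) ∈ Icc a b := by
    intro u hu
    rw [← hea, ← heb]
    constructor <;> apply Real.exp_le_exp.2 <;> nlinarith [hu.1, hu.2]
  have hmem' : ∀ u ∈ Icc (-1:ℝ) 1, Real.exp (p - k * u) ∈ Icc a b := by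
    intro u hu
    have := hmem (-u) ⟨by linarith [hu.2], by linarith [hu.1]⟩
    rwa [mul_neg, ← sub_eq_add_neg] at this
  have hM1 : ∀ u ∈ Icc (0:ℝ) 1, |f (Real.exp (p - k * u))| ≤ M₁ := by
    intro u hu
    refine hM₁.2 ⟨_, ⟨(hmem' u ⟨by linarith [hu.1], hu.2⟩).1, ?_⟩, rfl⟩
    rw [hsq]
    apply Real.exp_le_exp.2
    nlinarith [hu.1]
  have hM2 : ∀ u ∈ Icc (0:ℝ) 1, |f (Real.exp (p + k * u))| ≤ M₂ := by
    intro u hu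
    refine hM₂.2 ⟨_, ⟨?_, (hmem u ⟨by linarith [hu.1], hu.2⟩).2⟩, rfl⟩
    rw [hsq]
    apply Real.exp_le_exp.2
    nlinarith [hu.1]
  have hM10 : 0 ≤ M₁ := (abs_nonneg _).trans (hM1 0 (by simp))
  have hM20 : 0 ≤ M₂ := (abs_nonneg _).trans (hM2 0 (by simp))
  have haIcc : a ∈ Icc a b := left_mem_Icc.2 hab.le
  have hbIcc : b ∈ Icc a b := right_mem_Icc.2 hab.le
  set A := |f' a| with hA
  set B := |f' b| with hB
  have hA0 : 0 < A := by linarith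
  have hB0 : 0 < B := by linarith
  set r₁ := a * A ^ s / (b * B ^ s) with hr₁
  set r₂ := b * B ^ s / (a * A ^ s) with hr₂
  have hr₁0 : 0 < r₁ := by positivity
  have hr₂0 : 0 < r₂ := by positivity
  have hexpo : ∀ u : ℝ, a ^ ((1 - u) / 2) * b ^ (1 - (1 - u) / 2) = Real.exp (p + k * u) := by
    intro u
    rw [Real.rpow_def_of_pos ha0, Real.rpow_def_of_pos hb0, ← Real.exp_add]
    congr 1; rw [hp, hk]; ring
  have hexpo' : ∀ u : ℝ, b ^ ((1 - u) / 2) * a ^ (1 - (1 - u) / 2) = Real.exp (p - k * u) := by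
    intro u
    rw [Real.rpow_def_of_pos ha0, Real.rpow_def_of_pos hb0, ← Real.exp_add]
    congr 1; rw [hp, hk]; ring
  -- `l = (1 - u) / 2` in the convexity hypothesis gives the point `exp (p + k * u)`; exchanging
  -- the roles of `a` and `b` gives its mirror image `exp (p - k * u)`.
  have hpt1 : ∀ u ∈ Icc (0:ℝ) 1, Real.exp (p + k * u) * |f' (Real.exp (p + k * u))|
      ≤ b * B * A ^ (1 - s) * r₁ ^ ((1 - u) / 2) := by
    intro u hu
    have hl0 : 0 ≤ (1 - u) / 2 := by linarith [hu.2]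
    have hl1 : (1 - u) / 2 ≤ 1 := by linarith [hu.1]
    have := point_bound ha0 hb0 hfa hfb (abs_nonneg _) hq hs0 hs1 hl0 hl1
      (hconv a haIcc b hbIcc _ ⟨hl0, hl1⟩)
    rwa [hexpo] at this
  have hpt2 : ∀ u ∈ Icc (0:ℝ) 1, Real.exp (p - k * u) * |f' (Real.exp (p - k * u))|
      ≤ a * A * B ^ (1 - s) * r₂ ^ ((1 - u) / 2) := by
    intro u hu
    have hl0 : 0 ≤ (1 - u) / 2 := by linarith [hu.2]
    have hl1 : (1 - u) / 2 ≤ 1 := by linarith [hu.1]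
    have := point_bound hb0 ha0 hfb hfa (abs_nonneg _) hq hs0 hs1 hl0 hl1
      (hconv b hbIcc a haIcc _ ⟨hl0, hl1⟩)
    rwa [hexpo'] at this
  set g : ℝ → ℝ := fun u => f (Real.exp (p + k * u)) * f (Real.exp (p - k * u)) with hg
  set U : Set ℝ := {u | Real.exp (p + k * u) ∈ interior I} ∩ {u | Real.exp (p - k * u) ∈ interior I}
    with hUdef
  have hU : IsOpen U :=
    (isOpen_interior.preimage (by fun_prop : Continuous fun u : ℝ => Real.exp (p + k * u))).inter
      (isOpen_interior.preimage (by fun_prop : Continuous fun u : ℝ => Real.exp (p - k * u)))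
  have hIU : Icc (-1:ℝ) 1 ⊆ U := fun u hu => ⟨hsub (hmem u hu), hsub (hmem' u hu)⟩
  have hdp : ∀ u : ℝ, HasDerivAt (fun u : ℝ => Real.exp (p + k * u))
      (Real.exp (p + k * u) * k) u := by
    intro u
    have := (((hasDerivAt_id u).const_mul k).const_add p).exp
    simpa using this
  have hdm : ∀ u : ℝ, HasDerivAt (fun u : ℝ => Real.exp (p - k * u))
      (Real.exp (p - k * u) * (-k)) u := by
    intro u
    have := (((hasDerivAt_id u).const_mul k).const_sub p).exp
    simpa using this
  have hgd : ∀ u ∈ U, HasDerivAt g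
      (f' (Real.exp (p + k * u)) * (Real.exp (p + k * u) * k) * f (Real.exp (p - k * u))
        + f (Real.exp (p + k * u)) * (f' (Real.exp (p - k * u)) * (Real.exp (p - k * u) * (-k)))) u := by
    intro u hu
    exact ((hf _ hu.1).comp u (hdp u)).mul ((hf _ hu.2).comp u (hdm u))
  have hgc : ContinuousOn g U := fun u hu => (hgd u hu).continuousAt.continuousWithinAt
  have hc1 : Continuous fun u : ℝ => r₁ ^ ((1 - u) / 2) :=
    Continuous.rpow continuous_const (by fun_prop) (fun _ => Or.inl hr₁0.ne')
  have hc2 : Continuous fun u : ℝ => r₂ ^ ((1 - u) / 2) :=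
    Continuous.rpow continuous_const (by fun_prop) (fun _ => Or.inl hr₂0.ne')
  have key := trapezoid_bound (g := g)
    (K := fun u => k * (b * B * A ^ (1 - s) * M₁ * r₁ ^ ((1 - u) / 2)
      + a * A * B ^ (1 - s) * M₂ * r₂ ^ ((1 - u) / 2))) hU
    ((Icc_subset_Icc_left (by norm_num)).trans hIU) hgd (by fun_prop) (by
      intro u hu
      refine (abs_add_le _ _).trans ?_
      simp only [abs_mul, abs_neg, Real.abs_exp, abs_of_pos hk0]
      have e1 := mul_le_mul (hpt1 u hu) (hM1 u hu) (abs_nonneg _) (by positivity)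
      have e2 := mul_le_mul (hpt2 u hu) (hM2 u hu) (abs_nonneg _) (by positivity)
      have e3 := mul_le_mul_of_nonneg_left (add_le_add e1 e2) hk0.le
      refine (le_of_eq ?_).trans (e3.trans (le_of_eq ?_)) <;> ring)
  have hg1 : g 1 = f a * f b := by
    simp only [hg, mul_one, hea, heb]
    ring
  have hsubst : ∫ x in a..b, (f x / x) * f (a * b / x) = ∫ u in (-1:ℝ)..1, k * g u := by
    have hcont : ContinuousOn (fun x => (f x / x) * f (a * b / x)) (Icc a b) := by
      have hfc : ContinuousOn f (Icc a b) := fun x hx =>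
        (hf x (hsub hx)).continuousAt.continuousWithinAt
      have hne : ∀ x ∈ Icc a b, x ≠ 0 := fun x hx => (ha0.trans_le hx.1).ne'
      refine (hfc.div continuousOn_id hne).mul
        (hfc.comp (continuousOn_const.div continuousOn_id hne) ?_)
      intro x hx
      have hx0 : 0 < x := ha0.trans_le hx.1
      constructor
      · rw [le_div_iff₀ hx0]
        exact mul_le_mul_of_nonneg_left hx.2 ha0.le
      · rw [div_le_iff₀ hx0, mul_comm a b]
        exact mul_le_mul_of_nonneg_left hx.1 hb0.le
    have := intervalIntegral.integral_comp_mul_deriv' (a := (-1:ℝ)) (b := 1)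
      (f := fun u => Real.exp (p + k * u)) (f' := fun u => Real.exp (p + k * u) * k)
      (g := fun x => (f x / x) * f (a * b / x)) (fun u _ => hdp u) (by fun_prop)
      (hcont.mono (by
        rw [uIcc_of_le (by norm_num : (-1:ℝ) ≤ 1)]
        rintro _ ⟨u, hu, rfl⟩
        exact hmem u hu))
    simp only [mul_one, mul_neg, ← sub_eq_add_neg, hea, heb] at this
    rw [← this]
    refine intervalIntegral.integral_congr fun u _ => ?_
    have e : a * b / Real.exp (p + k * u) = Real.exp (p - k * u) := by
      rw [hab2, ← Real.exp_add, ← Real.exp_sub]; congr 1; ring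
    simp only [Function.comp_apply, e, hg]
    field_simp
  have heven : ∫ u in (-1:ℝ)..1, g u = 2 * ∫ u in (0:ℝ)..1, g u := by
    have hi : ∀ c d : ℝ, c ∈ Icc (-1:ℝ) 1 → d ∈ Icc (-1:ℝ) 1 → IntervalIntegrable g volume c d :=
      fun c d hc hd => (hgc.mono ((ordConnected_Icc.uIcc_subset hc hd).trans hIU)).intervalIntegrable
    rw [← intervalIntegral.integral_add_adjacent_intervals (b := 0)
      (hi _ _ (by norm_num) (by norm_num)) (hi _ _ (by norm_num) (by norm_num)), two_mul]
    congr 1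
    have := intervalIntegral.integral_comp_neg (a := 0) (b := 1) g
    rw [neg_zero] at this
    rw [← this]
    refine intervalIntegral.integral_congr fun u _ => ?_
    simp only [hg, mul_neg, ← sub_eq_add_neg, sub_neg_eq_add]
    ring
  have hL : Real.log b - Real.log a = 2 * k := by rw [hk]; ring
  have hL' : Real.log (b / a) = 2 * k := by rw [Real.log_div hb0.ne' ha0.ne', hL]
  have hlhs : f a * f b - (1 / (Real.log b - Real.log a)) * ∫ x in a..b, (f x / x) * f (a * b / x)
      = g 1 - ∫ u in (0:ℝ)..1, g u := by
    rw [hsubst, intervalIntegral.integral_const_mul, heven, hg1, hL]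
    field_simp
  rw [hlhs, hL']
  refine key.trans ?_
  have hsplit : ∫ u in (0:ℝ)..1, u * (k * (b * B * A ^ (1 - s) * M₁ * r₁ ^ ((1 - u) / 2)
      + a * A * B ^ (1 - s) * M₂ * r₂ ^ ((1 - u) / 2)))
      = k * (b * B * A ^ (1 - s) * M₁) * (∫ u in (0:ℝ)..1, u * r₁ ^ ((1 - u) / 2))
        + k * (a * A * B ^ (1 - s) * M₂) * ∫ u in (0:ℝ)..1, u * r₂ ^ ((1 - u) / 2) := by
    rw [← intervalIntegral.integral_const_mul, ← intervalIntegral.integral_const_mul,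
      ← intervalIntegral.integral_add (Continuous.intervalIntegrable (by fun_prop) _ _)
        (Continuous.intervalIntegrable (by fun_prop) _ _)]
    refine intervalIntegral.integral_congr fun u _ => ?_
    ring
  rw [hsplit]
  have e1 := mul_le_mul_of_nonneg_left (power_mean hr₁0 hq)
    (by positivity : 0 ≤ k * (b * B * A ^ (1 - s) * M₁))
  have e2 := mul_le_mul_of_nonneg_left (power_mean hr₂0 hq)
    (by positivity : 0 ≤ k * (a * A * B ^ (1 - s) * M₂))
  refine (add_le_add e1 e2).trans (le_of_eq ?_)
  rw [show (2:ℝ) - 1 / q = 1 + (1 - 1 / q) by ring, Real.rpow_add (by norm_num) 1 (1 - 1 / q),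
    Real.rpow_one]
  ring
end

section
/- Let f : I ⊆ (0,∞) → (0,∞) be differentiable on I°, a, b ∈ I° with a < b, f' integrable on [a,b], and let |f'|^q be s-geometrically convex on [a,b] for some q ≥ 1 and s ∈ (0,1]. If |f'(b)| ≤ 1 ≤ |f'(a)|, then |f(a)f(b) − (1/(ln b − ln a)) ∫_a^b (f(x)/x)·f(ab/x) dx| ≤ ln(b/a)·(1/2)^{2−1/q}·[ b·|f'(b)|^s·|f'(a)|^{1−s}·M₁·h₁(θ)^{1/q} + a·|f'(a)|·M₂·h₁(ϑ)^{1/q} ]. -/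
/-!
Put `L = log b - log a`, `g t = f (a^(1-t) b^t)` and `G t = g t * g (1 - t)`. The substitution
`x = a^(1-t) b^t` turns the averaged integral into `∫₀¹ G`, and `G` is symmetric about `1/2`
with `G 0 = f a * f b`. If `|G'| ≤ φ` on `[0, 1/2]`, then integrating `|G t - G 0| ≤ ∫₀ᵗ φ` and
integrating by parts gives `|G 0 - ∫₀¹ G| ≤ (1/2) ∫₀¹ (1 - u) φ (u/2) du`
(`abs_sub_integral_le`).

Since `s v ≤ v^s` and `(1-v)^s ≤ 1 - s v` on `[0, 1]`, the convexity hypothesis and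
`|f' b| ≤ 1 ≤ |f' a|` yield `|f' (a^(1-v) b^v)| ≤ |f' a|^(1 - s v) |f' b|^(s v)`, an exponential
in `v`. So `φ` may be taken to be a sum of two exponentials, which reduces everything to
`∫₀¹ (1 - u) exp (k u) du = h₁ (exp k)` (`integral_one_sub_mul_exp`) and the power mean inequality
for the weight `1 - u`, of total mass `1/2` (`integral_one_sub_mul_exp_le`).

If `f' b = 0`, the convexity hypothesis makes `f'` vanish on `(a, b]`, so `f' a = 0` by continuity
of `f`, against `1 ≤ |f' a|`; hence `|f' a|` and `|f' b|` are both positive, and all four of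
`a`, `b`, `|f' a|`, `|f' b|` can be written as exponentials.
-/

open Real MeasureTheory Set intervalIntegral

/-- The function `h₁` is the Laplace-type transform of the weight `1 - u` on `[0, 1]`. -/
theorem integral_one_sub_mul_exp (k : ℝ) :
    ∫ u in (0:ℝ)..1, (1 - u) * Real.exp (k * u) = h₁ (Real.exp k) := by
  unfold h₁
  by_cases hk : k = 0
  · subst hk
    have h : ∀ x ∈ Set.uIcc (0:ℝ) 1, HasDerivAt (fun u : ℝ => u - u ^ 2 / 2) (1 - x) x := by
      intro x _
      have := (hasDerivAt_id x).sub (((hasDerivAt_id x).pow 2).div_const 2)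
      exact this.congr_deriv (by simp)
    have := intervalIntegral.integral_eq_sub_of_hasDerivAt h
      ((by fun_prop : Continuous fun x : ℝ => 1 - x).intervalIntegrable _ _)
    simp only [zero_mul, Real.exp_zero, mul_one, if_true]
    rw [this]; norm_num
  · have h : ∀ x ∈ Set.uIcc (0:ℝ) 1, HasDerivAt
        (fun u : ℝ => ((1 - u) / k + 1 / k ^ 2) * Real.exp (k * u))
        ((1 - x) * Real.exp (k * x)) x := by
      intro x _
      have h1 : HasDerivAt (fun u : ℝ => (1 - u) / k + 1 / k ^ 2) (-1 / k) x :=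
        (((hasDerivAt_id x).const_sub 1).div_const k).add_const _
      have h2 : HasDerivAt (fun u : ℝ => Real.exp (k * u)) (Real.exp (k * x) * (k * 1)) x :=
        ((hasDerivAt_id x).const_mul k).exp
      exact (h1.mul h2).congr_deriv (by field_simp; ring)
    rw [intervalIntegral.integral_eq_sub_of_hasDerivAt h
      (Continuous.intervalIntegrable (by fun_prop) _ _)]
    have : Real.exp k ≠ 1 := by simpa using hk
    simp only [this, if_false, Real.log_exp, mul_one, mul_zero, Real.exp_zero]
    field_simp
    ring

/-- Power mean inequality for `exp (k u)` with respect to the weight `1 - u` on `[0, 1]`. -/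
theorem integral_one_sub_mul_exp_le (k q : ℝ) (hq : 1 ≤ q) :
    ∫ u in (0:ℝ)..1, (1 - u) * Real.exp (k * u)
      ≤ ((1:ℝ) / 2) ^ (1 - 1 / q) * (h₁ (Real.exp (k * q))) ^ (1 / q) := by
  have hq0 : 0 < q := by linarith
  set H := h₁ (Real.exp (k * q)) with hH
  have hHi := integral_one_sub_mul_exp (k * q)
  rw [← hH] at hHi
  have hHpos : 0 < H := by
    rw [← hHi]
    apply intervalIntegral.intervalIntegral_pos_of_pos_on
      (Continuous.intervalIntegrable (by fun_prop) _ _) _ zero_lt_one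
    intro x hx
    have : 0 < 1 - x := by linarith [hx.2]
    positivity
  -- `c` is the `q`-mean of `exp (k u)` for the normalized weight `2 (1 - u)`.
  set c := (2 * H) ^ (1 / q) with hc
  have hc0 : 0 < c := by positivity
  have hcq : c ^ q = 2 * H := by
    rw [hc, ← Real.rpow_mul (by positivity)]
    rw [one_div_mul_cancel hq0.ne', Real.rpow_one]
  -- Bernoulli's inequality: the tangent to `x ↦ x ^ q` at `c` lies below the graph.
  have key : ∀ u : ℝ, Real.exp (k * u)
      ≤ c * (1 - 1 / q) + c / (q * (2 * H)) * Real.exp (k * q * u) := by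
    intro u
    have h := one_add_mul_self_le_rpow_one_add (s := Real.exp (k * u) / c - 1)
      (by have : 0 < Real.exp (k * u) / c := by positivity
          linarith) hq
    rw [add_sub_cancel, Real.div_rpow (Real.exp_pos _).le hc0.le, ← Real.exp_mul, hcq] at h
    rw [show k * u * q = k * q * u by ring] at h
    have h2 := mul_le_mul_of_nonneg_left h (by positivity : 0 ≤ c / q)
    have e1 : c / q * (1 + q * (Real.exp (k * u) / c - 1))
        = Real.exp (k * u) - c * (1 - 1 / q) := by field_simp; ring
    have e2 : c / q * (Real.exp (k * q * u) / (2 * H))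
        = c / (q * (2 * H)) * Real.exp (k * q * u) := by field_simp
    rw [e1, e2] at h2
    linarith
  have h0 : ∫ u in (0:ℝ)..1, (1 - u) = 1 / 2 := by
    have := integral_one_sub_mul_exp 0
    simpa [h₁] using this
  calc ∫ u in (0:ℝ)..1, (1 - u) * Real.exp (k * u)
      ≤ ∫ u in (0:ℝ)..1, (c * (1 - 1 / q) * (1 - u)
          + c / (q * (2 * H)) * ((1 - u) * Real.exp (k * q * u))) := by
        apply intervalIntegral.integral_mono_on zero_le_one
          (Continuous.intervalIntegrable (by fun_prop) _ _)
          (Continuous.intervalIntegrable (by fun_prop) _ _)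
        intro x hx
        have := mul_le_mul_of_nonneg_left (key x) (by linarith [hx.2] : 0 ≤ 1 - x)
        linarith
    _ = c * (1 - 1 / q) * (1 / 2) + c / (q * (2 * H)) * H := by
        rw [intervalIntegral.integral_add (Continuous.intervalIntegrable (by fun_prop) _ _)
          (Continuous.intervalIntegrable (by fun_prop) _ _),
          intervalIntegral.integral_const_mul, intervalIntegral.integral_const_mul, h0, hHi]
    _ = c / 2 := by field_simp; ring
    _ = _ := by
        rw [hc, Real.mul_rpow (by norm_num) hHpos.le, Real.rpow_sub (by norm_num),
          Real.rpow_one, Real.div_rpow (by norm_num) (by norm_num), Real.one_rpow]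
        field_simp

/-- For `G` symmetric about `1/2` with `|G'| ≤ φ` on `[0, 1/2]`, the mean of `G` over `[0, 1]`
differs from `G 0` by at most the integral of `φ` against the kernel `1 - 2 t`. -/
theorem abs_sub_integral_le (G G' φ : ℝ → ℝ) (hφ : Continuous φ)
    (hG : ∀ t ∈ Set.Icc (0:ℝ) 1, HasDerivAt G (G' t) t)
    (hsymm : ∀ t, G (1 - t) = G t)
    (hb : ∀ t ∈ Set.Icc (0:ℝ) (1 / 2), |G' t| ≤ φ t) :
    |G 0 - ∫ t in (0:ℝ)..1, G t| ≤ 1 / 2 * ∫ u in (0:ℝ)..1, (1 - u) * φ (u / 2) := by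
  have hGc : ContinuousOn G (Set.Icc 0 1) := fun t ht => (hG t ht).continuousAt.continuousWithinAt
  have hGi : ∀ c d : ℝ, 0 ≤ c → c ≤ d → d ≤ 1 → IntervalIntegrable G volume c d := by
    intro c d hc hcd hd
    apply ContinuousOn.intervalIntegrable
    rw [Set.uIcc_of_le hcd]
    exact hGc.mono (Set.Icc_subset_Icc hc hd)
  set P : ℝ → ℝ := fun t => ∫ x in (0:ℝ)..t, φ x with hP
  have hPd : ∀ t, HasDerivAt P (φ t) t := fun t => (hφ.integral_hasStrictDerivAt 0 t).hasDerivAt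
  have hPc : Continuous P := continuous_iff_continuousAt.2 fun t => (hPd t).continuousAt
  have hP0 : P 0 = 0 := by simp [hP]
  have hGP : ∀ t ∈ Set.Icc (0:ℝ) (1 / 2), |G 0 - G t| ≤ P t := by
    intro t ht
    have := image_norm_le_of_norm_deriv_right_le_deriv_boundary' (f := fun t => G 0 - G t)
      (f' := fun t => - G' t) (a := 0) (b := 1 / 2) (B := P) (B' := φ)
      (continuousOn_const.sub (hGc.mono (Set.Icc_subset_Icc le_rfl (by norm_num))))
      (fun x hx => ((hG x ⟨hx.1, by linarith [hx.2]⟩).const_sub (G 0)).hasDerivWithinAt)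
      (by simp [hP0]) hPc.continuousOn (fun x _ => (hPd x).hasDerivWithinAt)
      (fun x hx => by simpa using hb x ⟨hx.1, hx.2.le⟩) ht
    simpa using this
  have hhalf : ∫ t in (0:ℝ)..1, G t = 2 * ∫ t in (0:ℝ)..(1 / 2), G t := by
    rw [← intervalIntegral.integral_add_adjacent_intervals
      (hGi 0 (1 / 2) le_rfl (by norm_num) (by norm_num))
      (hGi (1 / 2) 1 (by norm_num) (by norm_num) le_rfl)]
    have := intervalIntegral.integral_comp_sub_left (a := 0) (b := 1 / 2) G 1
    simp only [hsymm] at this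
    rw [this]
    norm_num
    ring
  have hdiff : G 0 - ∫ t in (0:ℝ)..1, G t = 2 * ∫ t in (0:ℝ)..(1 / 2), (G 0 - G t) := by
    rw [intervalIntegral.integral_sub (by simp)
      (hGi 0 (1 / 2) le_rfl (by norm_num) (by norm_num)), hhalf,
      intervalIntegral.integral_const]
    simp
    ring
  have hle : |∫ t in (0:ℝ)..(1 / 2), (G 0 - G t)| ≤ ∫ t in (0:ℝ)..(1 / 2), P t := by
    rw [← Real.norm_eq_abs]
    refine intervalIntegral.norm_integral_le_of_norm_le (by norm_num) ?_
      (hPc.intervalIntegrable _ _)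
    exact Filter.Eventually.of_forall fun t ht => hGP t ⟨ht.1.le, ht.2⟩
  have hparts : ∫ t in (0:ℝ)..(1 / 2), (t - 1 / 2) * φ t = - ∫ t in (0:ℝ)..(1 / 2), P t := by
    have := intervalIntegral.integral_mul_deriv_eq_deriv_mul (a := 0) (b := 1 / 2)
      (u := fun t : ℝ => t - 1 / 2) (u' := fun _ => 1) (v := P) (v' := φ)
      (fun x _ => (hasDerivAt_id x).sub_const _) (fun x _ => hPd x) (by simp)
      (hφ.intervalIntegrable _ _)
    rw [this]
    simp [hP0]
  have hsub := intervalIntegral.integral_comp_div (a := 0) (b := 1) (c := 2)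
    (fun t : ℝ => (1 - 2 * t) * φ t) two_ne_zero
  have e1 : ∫ u in (0:ℝ)..1, (1 - u) * φ (u / 2) = 2 * ∫ t in (0:ℝ)..(1/2), (1 - 2 * t) * φ t := by
    rw [zero_div, smul_eq_mul] at hsub
    rw [← hsub]
    congr 1
    ext u
    rw [mul_div_cancel₀ _ (two_ne_zero)]
  have e2 : ∫ t in (0:ℝ)..(1/2), (1 - 2 * t) * φ t = 2 * ∫ t in (0:ℝ)..(1 / 2), P t := by
    rw [← neg_eq_iff_eq_neg] at hparts
    rw [← hparts, ← intervalIntegral.integral_neg, ← intervalIntegral.integral_const_mul]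
    congr 1
    ext t
    ring
  rw [hdiff, abs_mul, abs_two, e1, e2]
  linarith

/-- A function with derivative zero on `(a, b]`, continuous at `a`, has no other derivative
at `a`. -/
theorem deriv_left_eq_zero {f f' : ℝ → ℝ} {a b : ℝ} (hab : a < b)
    (hf : ∀ x ∈ Set.Icc a b, HasDerivAt f (f' x) x) (h0 : ∀ x ∈ Set.Ioc a b, f' x = 0) :
    f' a = 0 := by
  have ha := hf a ⟨le_rfl, hab.le⟩
  have hmem : Set.Ioc a b ∈ nhdsWithin a (Set.Ioi a) := Ioc_mem_nhdsGT hab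
  have h2 : HasDerivWithinAt f 0 (Set.Ici a) a := by
    apply hasDerivWithinAt_Ici_of_tendsto_deriv (s := Set.Ioc a b)
    · exact fun x hx => (hf x ⟨hx.1.le, hx.2⟩).differentiableAt.differentiableWithinAt
    · exact ha.continuousAt.continuousWithinAt
    · exact hmem
    · apply tendsto_const_nhds.congr'
      filter_upwards [hmem] with x hx
      rw [(hf x ⟨hx.1.le, hx.2⟩).deriv, h0 x hx]
  exact (uniqueDiffWithinAt_Ici a).eq_deriv _ ha.hasDerivWithinAt h2

/-- The pointwise bound on `f'` given by geometric convexity, with `|f' (exp α)| = exp p ≥ 1` and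
`|f' (exp β)| = exp n ≤ 1`. -/
theorem abs_le_exp_of_conv {f' : ℝ → ℝ} {q s α β p n : ℝ} (hq : 1 ≤ q) (hs : s ∈ Set.Ioc (0:ℝ) 1)
    (hp : |f' (Real.exp α)| = Real.exp p) (hn : |f' (Real.exp β)| = Real.exp n)
    (hp0 : 0 ≤ p) (hn0 : n ≤ 0) {v : ℝ} (hv : v ∈ Set.Icc (0:ℝ) 1)
    (h : |f' (Real.exp α ^ (1 - v) * Real.exp β ^ (1 - (1 - v)))| ^ q ≤
      (|f' (Real.exp α)| ^ q) ^ ((1 - v) ^ s) * (|f' (Real.exp β)| ^ q) ^ ((1 - (1 - v)) ^ s)) :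
    |f' (Real.exp ((1 - v) * α + v * β))| ≤ Real.exp ((1 - s * v) * p + s * v * n) := by
  have hq0 : 0 < q := by linarith
  rw [sub_sub_cancel, hp, hn] at h
  simp only [← Real.exp_mul, ← Real.exp_add] at h
  rw [show α * (1 - v) + β * v = (1 - v) * α + v * β by ring] at h
  have h1 : s * v ≤ v ^ s := by
    have : v ^ (1:ℝ) ≤ v ^ s :=
      Real.rpow_le_rpow_of_exponent_ge_of_imp hv.1 hv.2 hs.2 (fun _ h => absurd h one_ne_zero)
    rw [Real.rpow_one] at this
    nlinarith [hs.2, hv.1]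
  have h2 : (1 - v) ^ s ≤ 1 - s * v := by
    have := rpow_one_add_le_one_add_mul_self (s := -v) (by linarith [hv.2]) hs.1.le hs.2
    rw [← sub_eq_add_neg] at this
    linarith
  rw [← Real.rpow_le_rpow_iff (abs_nonneg _) (Real.exp_pos _).le hq0]
  refine h.trans ?_
  rw [← Real.exp_mul, Real.exp_le_exp]
  have h3 : p * (1 - v) ^ s + n * v ^ s ≤ (1 - s * v) * p + s * v * n := by
    nlinarith [mul_le_mul_of_nonneg_left h2 hp0, mul_le_mul_of_nonpos_left h1 hn0]
  nlinarith

theorem stmt_5 (I : Set ℝ) (hI : I ⊆ Set.Ioi (0:ℝ)) (hI' : I.OrdConnected)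
    (f f' : ℝ → ℝ) (a b : ℝ) (ha : a ∈ interior I) (hb : b ∈ interior I) (hab : a < b)
    (hf : ∀ x ∈ interior I, HasDerivAt f (f' x) x)
    (hint : IntervalIntegrable f' volume a b)
    (hpos : ∀ x ∈ I, 0 < f x)
    (q s : ℝ) (hq : 1 ≤ q) (hs : s ∈ Set.Ioc (0:ℝ) 1)
    (hconv : ∀ x ∈ Set.Icc a b, ∀ y ∈ Set.Icc a b, ∀ l ∈ Set.Icc (0:ℝ) 1,
      |f' (x ^ l * y ^ (1 - l))| ^ q ≤ (|f' x| ^ q) ^ (l ^ s) * (|f' y| ^ q) ^ ((1 - l) ^ s))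
    (M₁ M₂ : ℝ)
    (hM₁ : IsGreatest ((fun x => |f x|) '' Set.Icc a (Real.sqrt (a*b))) M₁)
    (hM₂ : IsGreatest ((fun x => |f x|) '' Set.Icc (Real.sqrt (a*b)) b) M₂)
    (hfb : |f' b| ≤ 1) (hfa : 1 ≤ |f' a|) :
    |f a * f b - (1 / (Real.log b - Real.log a)) * ∫ x in a..b, (f x / x) * f (a * b / x)|
      ≤ Real.log (b / a) * ((1:ℝ) / 2) ^ (2 - 1 / q) *
        (b * |f' b| ^ s * |f' a| ^ (1 - s) * M₁ * (h₁ ((a * |f' a| ^ s / (b * |f' b| ^ s)) ^ (q / 2))) ^ (1 / q)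
          + a * |f' a| * M₂ * (h₁ ((b * |f' b| ^ s / (a * |f' a| ^ s)) ^ (q / 2))) ^ (1 / q)) := by
  have hoc : Set.Icc a b ⊆ interior I := hI'.interior.out ha hb
  have hf2 : ∀ x ∈ Set.Icc a b, HasDerivAt f (f' x) x := fun x hx => hf x (hoc hx)
  have hq0 : 0 < q := by linarith
  have ha0 : 0 < a := hI (interior_subset ha)
  have hb0 : 0 < b := hI (interior_subset hb)
  have hA0 : 0 < |f' a| := by linarith
  have hab' : a ∈ Set.Icc a b := ⟨le_rfl, hab.le⟩
  have hba' : b ∈ Set.Icc a b := ⟨hab.le, le_rfl⟩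
  obtain ⟨α, rfl⟩ : ∃ α, Real.exp α = a := ⟨_, Real.exp_log ha0⟩
  obtain ⟨β, rfl⟩ : ∃ β, Real.exp β = b := ⟨_, Real.exp_log hb0⟩
  have hαβ : α < β := Real.exp_lt_exp.1 hab
  have hmem : ∀ v ∈ Set.Icc (0:ℝ) 1,
      Real.exp ((1 - v) * α + v * β) ∈ Set.Icc (Real.exp α) (Real.exp β) := by
    intro v hv
    simp only [Set.mem_Icc, Real.exp_le_exp]
    constructor <;> nlinarith [hv.1, hv.2]
  have hB0 : 0 < |f' (Real.exp β)| := by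
    rw [abs_pos]
    intro hB
    apply abs_pos.1 hA0
    refine deriv_left_eq_zero hab hf2 fun x hx => ?_
    have hx0 : 0 < x := ha0.trans hx.1
    obtain ⟨y, rfl⟩ : ∃ y, Real.exp y = x := ⟨_, Real.exp_log hx0⟩
    have hy1 : α < y := Real.exp_lt_exp.1 hx.1
    have hy2 : y ≤ β := Real.exp_le_exp.1 hx.2
    have hd : 0 < β - α := by linarith
    set l := (β - y) / (β - α) with hl
    have hl0 : 0 ≤ l := div_nonneg (by linarith) hd.le
    have hl1 : l < 1 := (div_lt_one hd).2 (by linarith)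
    have h := hconv _ hab' _ hba' l ⟨hl0, hl1.le⟩
    have hpow : 0 < (1 - l) ^ s := Real.rpow_pos_of_pos (by linarith) _
    rw [hB, abs_zero, Real.zero_rpow hq0.ne', Real.zero_rpow hpow.ne', mul_zero,
      ← Real.exp_mul, ← Real.exp_mul, ← Real.exp_add] at h
    have hy : α * l + β * (1 - l) = y := by rw [hl]; field_simp; ring
    rw [hy] at h
    by_contra hne
    exact absurd h (not_le.2 (Real.rpow_pos_of_pos (abs_pos.2 hne) q))
  obtain ⟨p, hp⟩ : ∃ p, Real.exp p = |f' (Real.exp α)| := ⟨_, Real.exp_log hA0⟩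
  obtain ⟨n, hn⟩ : ∃ n, Real.exp n = |f' (Real.exp β)| := ⟨_, Real.exp_log hB0⟩
  have hp0 : 0 ≤ p := by rw [← hp] at hfa; exact Real.one_le_exp_iff.1 hfa
  have hn0 : n ≤ 0 := by rw [← hn] at hfb; exact Real.exp_le_one_iff.1 hfb
  have hbound : ∀ v ∈ Set.Icc (0:ℝ) 1, |f' (Real.exp ((1 - v) * α + v * β))|
      ≤ Real.exp ((1 - s * v) * p + s * v * n) := fun v hv =>
    abs_le_exp_of_conv hq hs hp.symm hn.symm hp0 hn0 hv
      (hconv _ hab' _ hba' (1 - v) ⟨by linarith [hv.2], by linarith [hv.1]⟩)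
  have hsqrt : Real.sqrt (Real.exp α * Real.exp β) = Real.exp ((α + β) / 2) := by
    rw [← Real.exp_add, Real.exp_half]
  rw [hsqrt] at hM₁ hM₂
  have hM1 : ∀ v ∈ Set.Icc (0:ℝ) (1 / 2), |f (Real.exp ((1 - v) * α + v * β))| ≤ M₁ := by
    intro v hv
    apply hM₁.2
    refine ⟨_, ⟨?_, ?_⟩, rfl⟩ <;> rw [Real.exp_le_exp] <;> nlinarith [hv.1, hv.2]
  have hM2 : ∀ v ∈ Set.Icc (1 / 2 : ℝ) 1, |f (Real.exp ((1 - v) * α + v * β))| ≤ M₂ := by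
    intro v hv
    apply hM₂.2
    refine ⟨_, ⟨?_, ?_⟩, rfl⟩ <;> rw [Real.exp_le_exp] <;> nlinarith [hv.1, hv.2]
  have hM1p : 0 ≤ M₁ := (abs_nonneg _).trans (hM1 0 ⟨le_rfl, by norm_num⟩)
  have hM2p : 0 ≤ M₂ := (abs_nonneg _).trans (hM2 1 ⟨by norm_num, le_rfl⟩)
  set L := β - α with hL
  have hL0 : 0 < L := by linarith
  set g : ℝ → ℝ := fun t => f (Real.exp ((1 - t) * α + t * β)) with hg
  set g' : ℝ → ℝ := fun t => f' (Real.exp ((1 - t) * α + t * β)) *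
    (Real.exp ((1 - t) * α + t * β) * L) with hg'
  have hxd : ∀ t : ℝ, HasDerivAt (fun t : ℝ => Real.exp ((1 - t) * α + t * β))
      (Real.exp ((1 - t) * α + t * β) * L) t := by
    intro t
    have h1 : HasDerivAt (fun t : ℝ => (1 - t) * α + t * β) (-1 * α + 1 * β) t :=
      (((hasDerivAt_id t).const_sub 1).mul_const α).add ((hasDerivAt_id t).mul_const β)
    exact h1.exp.congr_deriv (by rw [hL]; ring)
  have hgd : ∀ t ∈ Set.Icc (0:ℝ) 1, HasDerivAt g (g' t) t := fun t ht =>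
    (hf2 _ (hmem t ht)).comp t (hxd t)
  have hg'b : ∀ v ∈ Set.Icc (0:ℝ) 1, |g' v| ≤
      L * Real.exp ((1 - v) * α + v * β + ((1 - s * v) * p + s * v * n)) := by
    intro v hv
    rw [hg', Real.exp_add]
    simp only [abs_mul, Real.abs_exp, abs_of_pos hL0]
    have := mul_le_mul_of_nonneg_right (hbound v hv)
      (by positivity : 0 ≤ Real.exp ((1 - v) * α + v * β) * L)
    linarith
  -- `exp (k * q)` is `ϑ`, and `exp (-k * q)` is `θ`.
  set k := (β + s * n - α - s * p) / 2 with hk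
  set C₁ := Real.exp (β + s * n + (1 - s) * p) with hC₁
  set C₂ := Real.exp (α + p) with hC₂
  have hcore := abs_sub_integral_le (fun t => g t * g (1 - t))
    (fun t => g' t * g (1 - t) + g t * (-g' (1 - t)))
    (fun t => L * (M₁ * C₁ * Real.exp (-k * (2 * t)) + M₂ * C₂ * Real.exp (k * (2 * t))))
    (by fun_prop)
    (by
      intro t ht
      have ht' : 1 - t ∈ Set.Icc (0:ℝ) 1 := ⟨by linarith [ht.2], by linarith [ht.1]⟩
      have h2 : HasDerivAt (fun t => g (1 - t)) (g' (1 - t) * (-1)) t :=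
        HasDerivAt.comp (h₂ := g) t (hgd (1 - t) ht') ((hasDerivAt_id t).const_sub 1)
      exact ((hgd t ht).mul h2).congr_deriv (by ring))
    (by
      intro t
      simp only [sub_sub_cancel]
      ring)
    (by
      intro t ht
      have ht1 : t ∈ Set.Icc (0:ℝ) 1 := ⟨ht.1, by linarith [ht.2]⟩
      have ht' : 1 - t ∈ Set.Icc (0:ℝ) 1 := ⟨by linarith [ht1.2], by linarith [ht.1]⟩
      have ht2 : 1 - t ∈ Set.Icc (1 / 2:ℝ) 1 := ⟨by linarith [ht.2], by linarith [ht.1]⟩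
      have b1 := hg'b t ht1
      have b2 := hg'b (1 - t) ht'
      rw [show (1 - t) * α + t * β + ((1 - s * t) * p + s * t * n)
        = (α + p) + k * (2 * t) by rw [hk]; ring, Real.exp_add] at b1
      rw [show (1 - (1 - t)) * α + (1 - t) * β + ((1 - s * (1 - t)) * p + s * (1 - t) * n)
        = (β + s * n + (1 - s) * p) + -k * (2 * t) by rw [hk]; ring, Real.exp_add] at b2
      have c1 := mul_le_mul b1 (hM2 _ ht2) (abs_nonneg _) (by positivity)
      have c2 := mul_le_mul b2 (hM1 _ ht) (abs_nonneg _) (by positivity)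
      calc |g' t * g (1 - t) + g t * (-g' (1 - t))|
          ≤ |g' t| * |g (1 - t)| + |g' (1 - t)| * |g t| := by
            refine (abs_add_le _ _).trans_eq ?_
            rw [abs_mul (g' t), abs_mul (g t), abs_neg]
            ring
        _ ≤ _ := add_le_add c1 c2
        _ = _ := by ring)
  have hint2 : ∫ u in (0:ℝ)..1, (1 - u) * (L * (M₁ * C₁ * Real.exp (-k * (2 * (u / 2)))
        + M₂ * C₂ * Real.exp (k * (2 * (u / 2)))))
      = L * (M₁ * C₁) * (∫ u in (0:ℝ)..1, (1 - u) * Real.exp (-k * u))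
        + L * (M₂ * C₂) * (∫ u in (0:ℝ)..1, (1 - u) * Real.exp (k * u)) := by
    rw [← intervalIntegral.integral_const_mul, ← intervalIntegral.integral_const_mul,
      ← intervalIntegral.integral_add (Continuous.intervalIntegrable (by fun_prop) _ _)
        (Continuous.intervalIntegrable (by fun_prop) _ _)]
    congr 1
    ext u
    rw [mul_div_cancel₀ _ (two_ne_zero)]
    ring
  have hsubst : ∫ x in (Real.exp α)..(Real.exp β), (f x / x) * f (Real.exp α * Real.exp β / x)
      = L * ∫ t in (0:ℝ)..1, g t * g (1 - t) := by
    have himg : (fun t : ℝ => Real.exp ((1 - t) * α + t * β)) '' Set.uIcc 0 1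
        ⊆ Set.Icc (Real.exp α) (Real.exp β) := by
      rw [Set.uIcc_of_le zero_le_one]
      rintro _ ⟨t, ht, rfl⟩
      exact hmem t ht
    have hfc : ContinuousOn f (Set.Icc (Real.exp α) (Real.exp β)) :=
      fun x hx => (hf2 x hx).continuousAt.continuousWithinAt
    have hpos' : ∀ x ∈ Set.Icc (Real.exp α) (Real.exp β), 0 < x :=
      fun x hx => ha0.trans_le hx.1
    have hcont : ContinuousOn (fun x => (f x / x) * f (Real.exp α * Real.exp β / x))
        (Set.Icc (Real.exp α) (Real.exp β)) := by
      apply (hfc.div continuousOn_id fun x hx => (hpos' x hx).ne').mul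
      apply hfc.comp (continuousOn_const.div continuousOn_id fun x hx => (hpos' x hx).ne')
      intro x hx
      have hx0 := hpos' x hx
      change Real.exp α * Real.exp β / x ∈ Set.Icc (Real.exp α) (Real.exp β)
      constructor
      · rw [le_div_iff₀ hx0]
        exact mul_le_mul_of_nonneg_left hx.2 ha0.le
      · rw [div_le_iff₀ hx0, mul_comm]
        exact mul_le_mul_of_nonneg_left hx.1 hb0.le
    have h := intervalIntegral.integral_comp_mul_deriv' (a := 0) (b := 1)
      (fun t _ => hxd t) (by fun_prop) (hcont.mono himg)
    simp only [sub_zero, one_mul, zero_mul, add_zero, sub_self, zero_add] at h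
    rw [← h, ← intervalIntegral.integral_const_mul]
    congr 1
    ext t
    have e : Real.exp α * Real.exp β / Real.exp ((1 - t) * α + t * β)
        = Real.exp ((1 - (1 - t)) * α + (1 - t) * β) := by
      rw [← Real.exp_add, ← Real.exp_sub]
      congr 1
      ring
    simp only [Function.comp, e, hg]
    field_simp
  have hθ : (Real.exp α * |f' (Real.exp α)| ^ s / (Real.exp β * |f' (Real.exp β)| ^ s)) ^ (q / 2)
      = Real.exp (-k * q) := by
    rw [← hp, ← hn, ← Real.exp_mul, ← Real.exp_mul, ← Real.exp_add, ← Real.exp_add,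
      ← Real.exp_sub, ← Real.exp_mul, hk]
    congr 1
    ring
  have hϑ : (Real.exp β * |f' (Real.exp β)| ^ s / (Real.exp α * |f' (Real.exp α)| ^ s)) ^ (q / 2)
      = Real.exp (k * q) := by
    rw [← hp, ← hn, ← Real.exp_mul, ← Real.exp_mul, ← Real.exp_add, ← Real.exp_add,
      ← Real.exp_sub, ← Real.exp_mul, hk]
    congr 1
    ring
  have hC1 : Real.exp β * |f' (Real.exp β)| ^ s * |f' (Real.exp α)| ^ (1 - s) = C₁ := by
    rw [← hp, ← hn, ← Real.exp_mul, ← Real.exp_mul, ← Real.exp_add, ← Real.exp_add, hC₁]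
    congr 1
    ring
  have hC2 : Real.exp α * |f' (Real.exp α)| = C₂ := by rw [← hp, ← Real.exp_add]
  have hlog : Real.log (Real.exp β / Real.exp α) = L := by rw [← Real.exp_sub, Real.log_exp]
  have hhalf : ((1:ℝ) / 2) ^ (2 - 1 / q) = 1 / 2 * ((1:ℝ) / 2) ^ (1 - 1 / q) := by
    rw [show 2 - 1 / q = 1 + (1 - 1 / q) by ring, Real.rpow_add (by norm_num), Real.rpow_one]
  rw [hθ, hϑ, hC1, hC2, hlog, hhalf, hsubst, Real.log_exp, Real.log_exp, ← hL, ← mul_assoc,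
    one_div_mul_cancel hL0.ne', one_mul]
  rw [hint2] at hcore
  simp only [hg, sub_zero, one_mul, zero_mul, add_zero, sub_self, zero_add] at hcore
  refine hcore.trans ?_
  have i1 := mul_le_mul_of_nonneg_left (integral_one_sub_mul_exp_le (-k) q hq)
    (by positivity : 0 ≤ L * (M₁ * C₁))
  have i2 := mul_le_mul_of_nonneg_left (integral_one_sub_mul_exp_le k q hq)
    (by positivity : 0 ≤ L * (M₂ * C₂))
  linarith
end

section
/- Let f : I ⊆ (0,∞) → (0,∞) be differentiable on I°, a, b ∈ I° with a < b, f' integrable on [a,b], and let |f'|^q be s-geometrically convex on [a,b] for some q ≥ 1 and s ∈ (0,1]. If |f'(a)| ≤ 1 and |f'(b)| ≤ 1, then |f(√(ab))² − (1/(ln b − ln a)) ∫_a^b (f(x)/x)·f(ab/x) dx| ≤ ln(b/a)·(1/2)^{2−1/q}·[ b·|f'(b)|^s·M₁·h₂(θ)^{1/q} + a·|f'(a)|^s·M₂·h₂(ϑ)^{1/q} ]. -/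
/-!
Write `F t = f (a ^ (1 - t) * b ^ t)`, `L = log (b / a)` and `φ t = F t * F (1 - t)`. The
substitution `x = a ^ (1 - t) * b ^ t` turns the left side into `|φ (1/2) - ∫₀¹ φ|`, and as `φ` is
symmetric about `1/2`, integration by parts makes this `2 |∫₀^{1/2} t φ' t dt|`
(`midpoint_estimate`, which replaces the integration by parts with a comparison argument).

With `A = a |f' a| ^ s` and `B = b |f' b| ^ s`, geometric convexity together with `t ^ s ≥ s t` and
`|f' a|, |f' b| ≤ 1` gives `|F' t| ≤ L A ^ (1 - t) B ^ t`. Bounding the undifferentiated factors by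
`M₁` and `M₂` leaves the integrals `∫₀^{1/2} t r ^ t dt = h₂ (r ^ (1/2)) / 4` for `r = A / B` and
`r = B / A`. The power `q` enters through the power-mean inequality `h₂_le_power_mean`, a
consequence of the representation `h₂ r = ∫₀¹ u r ^ u du`.

If `f' a` or `f' b` vanishes, convexity forces `f' = 0` on `(a, b)` and the left side is zero.
-/

open Real MeasureTheory Set intervalIntegral

noncomputable def h₂ (u : ℝ) : ℝ :=
  if u = 1 then 1/2 else (u * Real.log u - u + 1) / (Real.log u) ^ 2

/-! ### Properties of `h₂` -/

/-- The integral representation of `h₂`, from which its positivity and the power-mean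
inequality are read off. -/
lemma integral_mul_rpow_s6 (r : ℝ) (hr : 0 < r) : ∫ u in (0:ℝ)..1, u * r ^ u = h₂ r := by
  unfold h₂
  split_ifs with h
  · subst h
    simp
  · have hl : Real.log r ≠ 0 := Real.log_ne_zero_of_pos_of_ne_one hr h
    have hd : ∀ u ∈ uIcc (0:ℝ) 1,
        HasDerivAt (fun u : ℝ => r ^ u * (u / Real.log r - 1 / Real.log r ^ 2)) (u * r ^ u) u := by
      intro u _
      have h1 := (Real.hasStrictDerivAt_const_rpow hr u).hasDerivAt
      have h2 := ((hasDerivAt_id u).div_const (Real.log r)).sub_const (1 / Real.log r ^ 2)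
      refine (h1.mul h2).congr_deriv ?_
      simp only [id]
      field_simp
      ring
    have hc : Continuous fun u : ℝ => u * r ^ u :=
      continuous_id.mul (Real.continuous_const_rpow hr.ne')
    rw [integral_eq_sub_of_hasDerivAt hd (hc.intervalIntegrable _ _)]
    simp
    field_simp

lemma h₂_pos (r : ℝ) (hr : 0 < r) : 0 < h₂ r := by
  rw [← integral_mul_rpow_s6 r hr]
  refine intervalIntegral_pos_of_pos_on ?_ ?_ one_pos
  · exact (continuous_id.mul (Real.continuous_const_rpow hr.ne')).intervalIntegrable _ _
  · intro u hu
    have := hu.1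
    positivity

/-- The value `h₂ 0` is a division by `log 0 ^ 2 = 0`, hence `0`. -/
lemma h₂_nonneg (r : ℝ) (hr : 0 ≤ r) : 0 ≤ h₂ r := by
  rcases hr.eq_or_lt with rfl | h
  · simp [h₂]
  · exact (h₂_pos r h).le

/-- The power-mean inequality for the probability measure `2 u du` on `[0, 1]` and the function
`u ↦ r ^ u`. -/
lemma h₂_le_power_mean (r q : ℝ) (hr : 0 < r) (hq : 1 ≤ q) :
    h₂ r ≤ ((1:ℝ) / 2) ^ (1 - 1 / q) * h₂ (r ^ q) ^ (1 / q) := by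
  have hq0 : 0 < q := by linarith
  set m := 2 * h₂ r with hm
  have hm0 : 0 < m := by have := h₂_pos r hr; positivity
  have hH := h₂_pos (r ^ q) (by positivity)
  have hcr : ∀ r : ℝ, 0 < r → Continuous fun u : ℝ => u * r ^ u := fun r hr =>
    continuous_id.mul (Real.continuous_const_rpow hr.ne')
  -- The inequality of Bernoulli is the tangent-line bound for `x ↦ x ^ q` at the mean `m`.
  have key : ∀ u ∈ Icc (0:ℝ) 1,
      m ^ q * (u * (1 - q) + q / m * (u * r ^ u)) ≤ u * (r ^ q) ^ u := by
    intro u hu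
    have h0 : 0 < r ^ u := by positivity
    have hb := one_add_mul_self_le_rpow_one_add (s := r ^ u / m - 1) (p := q)
      (by have : 0 < r ^ u / m := by positivity
          linarith) hq
    rw [show 1 + (r ^ u / m - 1) = r ^ u / m by ring, Real.div_rpow h0.le hm0.le,
      ← Real.rpow_mul hr.le, mul_comm u q, Real.rpow_mul hr.le, le_div_iff₀ (by positivity)] at hb
    have := mul_le_mul_of_nonneg_left hb hu.1
    refine le_trans (le_of_eq ?_) this
    ring
  have hint : ∫ u in (0:ℝ)..1, m ^ q * (u * (1 - q) + q / m * (u * r ^ u)) ≤ h₂ (r ^ q) := by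
    rw [← integral_mul_rpow_s6 (r ^ q) (by positivity)]
    refine integral_mono_on zero_le_one ?_ ?_ key
    · exact (continuous_const.mul ((continuous_id.mul continuous_const).add
        (continuous_const.mul (hcr r hr)))).intervalIntegrable _ _
    · exact (hcr _ (by positivity)).intervalIntegrable _ _
  have i1 : IntervalIntegrable (fun u : ℝ => u * (1 - q)) volume 0 1 :=
    (continuous_id.mul continuous_const).intervalIntegrable _ _
  have i2 : IntervalIntegrable (fun u : ℝ => q / m * (u * r ^ u)) volume 0 1 :=
    (continuous_const.mul (hcr r hr)).intervalIntegrable _ _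
  rw [intervalIntegral.integral_const_mul, intervalIntegral.integral_add i1 i2,
    intervalIntegral.integral_const_mul, intervalIntegral.integral_mul_const,
    integral_mul_rpow_s6 r hr, integral_id] at hint
  have hval : ((1:ℝ) ^ 2 - 0 ^ 2) / 2 * (1 - q) + q / m * h₂ r = 1 / 2 := by
    have : h₂ r = m / 2 := by rw [hm]; ring
    rw [this]
    field_simp
    ring
  rw [hval] at hint
  have h3 : m ≤ (2 * h₂ (r ^ q)) ^ (1 / q) := by
    rw [one_div, Real.le_rpow_inv_iff_of_pos hm0.le (by positivity) hq0]
    linarith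
  rw [Real.mul_rpow (by norm_num) hH.le] at h3
  have h4 : ((1:ℝ) / 2) ^ (1 - 1 / q) = 1 / 2 * 2 ^ (1 / q) := by
    rw [Real.rpow_sub (by norm_num), Real.rpow_one, one_div 2, Real.inv_rpow (by norm_num)]
    field_simp
  rw [h4]
  linarith

lemma integral_half_mul_rpow (r : ℝ) (hr : 0 < r) :
    ∫ t in (0:ℝ)..(1 / 2), t * r ^ t = 1 / 4 * h₂ (r ^ ((1:ℝ) / 2)) := by
  rw [← integral_mul_rpow_s6 _ (by positivity)]
  have h := mul_integral_comp_mul_left (a := (0:ℝ)) (b := 1 / 2)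
    (f := fun u : ℝ => u * (r ^ ((1:ℝ) / 2)) ^ u) 2
  have h2 : ∀ t : ℝ, 2 * t * (r ^ ((1:ℝ) / 2)) ^ (2 * t) = 2 * (t * r ^ t) := by
    intro t
    rw [← Real.rpow_mul hr.le, show (1:ℝ) / 2 * (2 * t) = t by ring]
    ring
  simp only [h2, intervalIntegral.integral_const_mul] at h
  norm_num at h ⊢
  linarith

/-! ### The midpoint estimate -/

/-- A midpoint estimate for the symmetric function `t ↦ F t * F (1 - t)`. The comparison form of
the mean value theorem is applied to `Φ t = t φ t - ∫₀ᵗ φ`, whose derivative is `t φ' t`; no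
integrability of `F'` is needed, and the factor `t` makes a bound on the open interval suffice. -/
lemma midpoint_estimate (F F' K : ℝ → ℝ) (M₁ M₂ : ℝ)
    (hF : ∀ t ∈ Icc (0:ℝ) 1, HasDerivAt F (F' t) t)
    (h1 : ∀ t ∈ Icc (0:ℝ) (1 / 2), |F t| ≤ M₁) (h2 : ∀ t ∈ Icc (1 / 2 : ℝ) 1, |F t| ≤ M₂)
    (hK : Continuous K) (hFK : ∀ t ∈ Ioo (0:ℝ) 1, |F' t| ≤ K t) :
    |F (1 / 2) ^ 2 - ∫ t in (0:ℝ)..1, F t * F (1 - t)|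
      ≤ 2 * ∫ t in (0:ℝ)..(1 / 2), t * (M₂ * K t + M₁ * K (1 - t)) := by
  set φ : ℝ → ℝ := fun t => F t * F (1 - t) with hφ
  have hφd : ∀ t ∈ Icc (0:ℝ) 1, HasDerivAt φ (F' t * F (1 - t) - F t * F' (1 - t)) t := by
    intro t ht
    have e1 := hF t ht
    have e2 := hF (1 - t) ⟨by linarith [ht.2], by linarith [ht.1]⟩
    have e3 : HasDerivAt (fun t : ℝ => F (1 - t)) (F' (1 - t) * (-1)) t :=
      HasDerivAt.comp t e2 ((hasDerivAt_id t).const_sub 1)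
    refine (e1.mul e3).congr_deriv ?_
    ring
  have hφc : ContinuousOn φ (Icc 0 1) := fun t ht => (hφd t ht).continuousAt.continuousWithinAt
  have hφi : ∀ x ∈ Icc (0:ℝ) 1, ∀ y ∈ Icc (0:ℝ) 1, IntervalIntegrable φ volume x y := by
    intro x hx y hy
    exact (hφc.mono (uIcc_subset_Icc hx hy)).intervalIntegrable
  -- By the symmetry of `φ` about `1 / 2`, half of the interval carries half of the integral.
  have hsymm : ∫ t in (0:ℝ)..1, φ t = 2 * ∫ t in (0:ℝ)..(1 / 2), φ t := by
    have hh : (1 / 2 : ℝ) ∈ Icc (0:ℝ) 1 := by norm_num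
    rw [← integral_add_adjacent_intervals (hφi 0 (by simp) (1 / 2) hh)
      (hφi (1 / 2) hh 1 (by simp))]
    have := intervalIntegral.integral_comp_sub_left (a := (1 / 2 : ℝ)) (b := 1) φ 1
    have e : ∀ t, φ (1 - t) = φ t := by
      intro t
      simp only [hφ, sub_sub_cancel]
      ring
    simp only [e] at this
    rw [this]
    norm_num
    ring
  set g : ℝ → ℝ := fun t => t * (M₂ * K t + M₁ * K (1 - t)) with hg
  have hgc : Continuous g := by fun_prop
  have hmain := image_norm_le_of_norm_deriv_right_le_deriv_boundary
    (f := fun t => t * φ t - ∫ u in (0:ℝ)..t, φ u)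
    (f' := fun t => t * (F' t * F (1 - t) - F t * F' (1 - t)))
    (a := 0) (b := 1 / 2) (B := fun t => ∫ u in (0:ℝ)..t, g u) (B' := g)
    ?_ ?_ ?_ ?_ ?_ (x := 1 / 2) (by norm_num)
  · rw [hsymm]
    have hhalf : φ (1 / 2) = F (1 / 2) ^ 2 := by
      simp only [hφ]
      norm_num
      ring
    rw [hhalf, Real.norm_eq_abs] at hmain
    calc |F (1 / 2) ^ 2 - 2 * ∫ t in (0:ℝ)..(1 / 2), φ t|
        = 2 * |1 / 2 * F (1 / 2) ^ 2 - ∫ t in (0:ℝ)..(1 / 2), φ t| := by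
          rw [← abs_two (α := ℝ), ← abs_mul, abs_two]
          congr 1
          ring
      _ ≤ _ := by linarith
  · refine ContinuousOn.sub (continuousOn_id.mul (hφc.mono (Icc_subset_Icc_right (by norm_num)))) ?_
    have : ContinuousOn (fun t => ∫ u in (0:ℝ)..t, φ u) (uIcc (0:ℝ) (1 / 2)) := by
      apply continuousOn_primitive_interval
      rw [uIcc_of_le (by norm_num)]
      exact (hφc.mono (Icc_subset_Icc_right (by norm_num))).integrableOn_Icc
    rwa [uIcc_of_le (by norm_num)] at this
  · intro t ht
    have ht' : t ∈ Icc (0:ℝ) 1 := ⟨ht.1, by linarith [ht.2]⟩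
    have e1 : HasDerivWithinAt (fun t => ∫ u in (0:ℝ)..t, φ u) (φ t) (Ici t) t := by
      refine integral_hasDerivWithinAt_right (hφi 0 (by simp) t ht') ?_
        ((hφd t ht').continuousAt.continuousWithinAt)
      have hnhds : Icc (0:ℝ) 1 ∈ nhdsWithin t (Ioi t) := by
        refine Filter.mem_of_superset (Ioo_mem_nhdsGT (show t < 1 by linarith [ht.2])) ?_
        exact fun y hy => ⟨by linarith [hy.1, ht.1], hy.2.le⟩
      exact ⟨Icc 0 1, hnhds, hφc.aestronglyMeasurable measurableSet_Icc⟩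
    have e2 := ((hasDerivAt_id t).mul (hφd t ht')).hasDerivWithinAt (s := Ici t)
    refine (e2.sub e1).congr_deriv ?_
    simp only [id]
    ring
  · simp
  · intro t
    exact (integral_hasDerivAt_right (hgc.intervalIntegrable _ _)
      hgc.aestronglyMeasurable.stronglyMeasurableAtFilter hgc.continuousAt)
  · intro t ht
    rcases ht.1.eq_or_lt with rfl | h0
    · simp [hg]
    · have hlt := ht.2
      have b1 := h1 t ⟨ht.1, ht.2.le⟩
      have b2 := h2 (1 - t) ⟨by linarith, by linarith⟩
      have b3 := hFK t ⟨h0, by linarith⟩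
      have b4 := hFK (1 - t) ⟨by linarith, by linarith⟩
      rw [Real.norm_eq_abs, abs_mul, abs_of_pos h0]
      refine mul_le_mul_of_nonneg_left ?_ h0.le
      refine (abs_sub _ _).trans ?_
      rw [abs_mul, abs_mul]
      have c1 := mul_le_mul b3 b2 (abs_nonneg _) ((abs_nonneg _).trans b3)
      have c2 := mul_le_mul b1 b4 (abs_nonneg _) ((abs_nonneg _).trans b1)
      linarith

/-! ### The logarithmic substitution -/

lemma mul_exp_eq_rpow (a b t : ℝ) (ha : 0 < a) (hb : 0 < b) :
    a * Real.exp (t * Real.log (b / a)) = a ^ (1 - t) * b ^ t := by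
  rw [Real.log_div hb.ne' ha.ne', Real.rpow_def_of_pos ha, Real.rpow_def_of_pos hb, ← Real.exp_add]
  nth_rewrite 1 [← Real.exp_log ha]
  rw [← Real.exp_add]
  congr 1
  ring

/-- The substitution `x = a * exp (t log (b / a)) = a ^ (1 - t) * b ^ t`. -/
lemma integral_change_variable (f : ℝ → ℝ) (a b : ℝ) (ha : 0 < a) (hab : a < b)
    (hf : ContinuousOn f (Icc a b)) :
    (1 / (Real.log b - Real.log a)) * ∫ x in a..b, (f x / x) * f (a * b / x)
      = ∫ t in (0:ℝ)..1, f (a * Real.exp (t * Real.log (b / a)))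
          * f (a * Real.exp ((1 - t) * Real.log (b / a))) := by
  have hb : 0 < b := ha.trans hab
  set L := Real.log (b / a) with hL
  have hL0 : 0 < L := Real.log_pos ((one_lt_div ha).2 hab)
  have hexp : Real.exp L = b / a := Real.exp_log (by positivity)
  have hd : ∀ t ∈ uIcc (0:ℝ) 1,
      HasDerivAt (fun t => a * Real.exp (t * L)) (a * (Real.exp (t * L) * L)) t := by
    intro t _
    have := (((hasDerivAt_id t).mul_const L).exp).const_mul a
    simpa using this
  have himg : (fun t => a * Real.exp (t * L)) '' uIcc (0:ℝ) 1 ⊆ Icc a b := by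
    rintro _ ⟨t, ht, rfl⟩
    rw [uIcc_of_le zero_le_one] at ht
    have h1 : 1 ≤ Real.exp (t * L) := Real.one_le_exp (mul_nonneg ht.1 hL0.le)
    have h2 : Real.exp (t * L) ≤ b / a := by
      rw [← hexp]
      exact Real.exp_le_exp.2 (by nlinarith [ht.2])
    rw [le_div_iff₀ ha] at h2
    exact ⟨by nlinarith, by linarith⟩
  have hg : ContinuousOn (fun x => (f x / x) * f (a * b / x)) (Icc a b) := by
    have hne : ∀ x ∈ Icc a b, x ≠ 0 := fun x hx => (ha.trans_le hx.1).ne'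
    refine (hf.div continuousOn_id hne).mul ?_
    refine hf.comp (continuousOn_const.div continuousOn_id hne) ?_
    intro x hx
    have hx0 : 0 < x := ha.trans_le hx.1
    simp only [mem_Icc]
    rw [le_div_iff₀ hx0, div_le_iff₀ hx0]
    exact ⟨by nlinarith [hx.2], by nlinarith [hx.1]⟩
  have hs := integral_comp_mul_deriv' hd (by fun_prop) (hg.mono himg)
  simp only [zero_mul, one_mul, Real.exp_zero, mul_one, hexp] at hs
  rw [show a * (b / a) = b by field_simp] at hs
  rw [← hs, ← Real.log_div hb.ne' ha.ne', ← hL, ← intervalIntegral.integral_const_mul]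
  refine integral_congr fun t _ => ?_
  have h0 := Real.exp_pos (t * L)
  have h3 : a * b / (a * Real.exp (t * L)) = a * Real.exp ((1 - t) * L) := by
    rw [sub_mul, one_mul, Real.exp_sub, hexp]
    field_simp
  simp only [Function.comp, h3]
  field_simp

/-! ### Consequences of geometric convexity -/

/-- The power `q` cancels from both sides of the geometric convexity inequality. -/
lemma deriv_bound (x A B q c d : ℝ) (hq : 0 < q)
    (h : |x| ^ q ≤ (|A| ^ q) ^ c * (|B| ^ q) ^ d) : |x| ≤ |A| ^ c * |B| ^ d := by
  rw [← Real.rpow_mul (abs_nonneg _), ← Real.rpow_mul (abs_nonneg _), mul_comm q c, mul_comm q d,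
    Real.rpow_mul (abs_nonneg _), Real.rpow_mul (abs_nonneg _),
    ← Real.mul_rpow (by positivity) (by positivity)] at h
  exact (Real.rpow_le_rpow_iff (abs_nonneg _) (by positivity) hq).1 h

/-- Since `t ^ s ≥ s t` on `[0, 1]`, a base in `(0, 1]` lets the exponent be linearised. -/
lemma rpow_rpow_le (A t s : ℝ) (hA : 0 < A) (hA1 : A ≤ 1) (ht : t ∈ Ioo (0:ℝ) 1)
    (hs : s ∈ Ioc (0:ℝ) 1) : A ^ (t ^ s) ≤ (A ^ s) ^ t := by
  rw [← Real.rpow_mul hA.le]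
  apply Real.rpow_le_rpow_of_exponent_ge hA hA1
  have := Real.rpow_le_rpow_of_exponent_ge ht.1 ht.2.le hs.2
  rw [Real.rpow_one] at this
  nlinarith [ht.1, hs.2]

/-! ### The Hermite-Hadamard type inequality -/

theorem stmt_6 (I : Set ℝ) (hI : I ⊆ Set.Ioi (0:ℝ)) (hI' : I.OrdConnected)
    (f f' : ℝ → ℝ) (a b : ℝ) (ha : a ∈ interior I) (hb : b ∈ interior I) (hab : a < b)
    (hf : ∀ x ∈ interior I, HasDerivAt f (f' x) x)
    (hint : IntervalIntegrable f' volume a b)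
    (hpos : ∀ x ∈ I, 0 < f x)
    (q s : ℝ) (hq : 1 ≤ q) (hs : s ∈ Set.Ioc (0:ℝ) 1)
    (hconv : ∀ x ∈ Set.Icc a b, ∀ y ∈ Set.Icc a b, ∀ l ∈ Set.Icc (0:ℝ) 1,
      |f' (x ^ l * y ^ (1 - l))| ^ q ≤ (|f' x| ^ q) ^ (l ^ s) * (|f' y| ^ q) ^ ((1 - l) ^ s))
    (M₁ M₂ : ℝ)
    (hM₁ : IsGreatest ((fun x => |f x|) '' Set.Icc a (Real.sqrt (a*b))) M₁)
    (hM₂ : IsGreatest ((fun x => |f x|) '' Set.Icc (Real.sqrt (a*b)) b) M₂)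
    (hfa : |f' a| ≤ 1) (hfb : |f' b| ≤ 1) :
    |f (Real.sqrt (a*b)) ^ 2 - (1 / (Real.log b - Real.log a)) * ∫ x in a..b, (f x / x) * f (a * b / x)|
      ≤ Real.log (b / a) * ((1:ℝ) / 2) ^ (2 - 1 / q) *
        (b * |f' b| ^ s * M₁ * (h₂ ((a * |f' a| ^ s / (b * |f' b| ^ s)) ^ (q / 2))) ^ (1 / q)
          + a * |f' a| ^ s * M₂ * (h₂ ((b * |f' b| ^ s / (a * |f' a| ^ s)) ^ (q / 2))) ^ (1 / q)) := by
  have haI : a ∈ I := interior_subset ha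
  have ha0 : 0 < a := hI haI
  have hb0 : 0 < b := ha0.trans hab
  have hq0 : 0 < q := by linarith
  have hsub : Icc a b ⊆ interior I := hI'.interior.out ha hb
  set L := Real.log (b / a) with hL
  have hL0 : 0 < L := Real.log_pos ((one_lt_div ha0).2 hab)
  have hexp : Real.exp L = b / a := Real.exp_log (by positivity)
  have hX : ∀ t, a * Real.exp (t * L) = a ^ (1 - t) * b ^ t := fun t =>
    mul_exp_eq_rpow a b t ha0 hb0
  have hmono : ∀ t u, t ≤ u → a * Real.exp (t * L) ≤ a * Real.exp (u * L) := fun t u h =>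
    mul_le_mul_of_nonneg_left (Real.exp_le_exp.2 (mul_le_mul_of_nonneg_right h hL0.le)) ha0.le
  have hX0 : a * Real.exp (0 * L) = a := by simp
  have hX1 : a * Real.exp (1 * L) = b := by
    rw [one_mul, hexp]
    field_simp
  have hXh : a * Real.exp (1 / 2 * L) = Real.sqrt (a * b) := by
    rw [hX, Real.sqrt_eq_rpow, Real.mul_rpow ha0.le hb0.le]
    norm_num
  have hmem : ∀ t ∈ Icc (0:ℝ) 1, a * Real.exp (t * L) ∈ Icc a b := by
    intro t ht
    constructor
    · simpa only [hX0] using hmono 0 t ht.1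
    · simpa only [hX1] using hmono t 1 ht.2
  set F : ℝ → ℝ := fun t => f (a * Real.exp (t * L)) with hFdef
  set F' : ℝ → ℝ := fun t => f' (a * Real.exp (t * L)) * (a * (Real.exp (t * L) * L)) with hF'def
  have hF : ∀ t ∈ Icc (0:ℝ) 1, HasDerivAt F (F' t) t := by
    intro t ht
    have e1 := hf _ (hsub (hmem t ht))
    have e2 : HasDerivAt (fun t => a * Real.exp (t * L)) (a * (Real.exp (t * L) * L)) t := by
      simpa using (((hasDerivAt_id t).mul_const L).exp).const_mul a
    exact HasDerivAt.comp t e1 e2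
  have h1 : ∀ t ∈ Icc (0:ℝ) (1 / 2), |F t| ≤ M₁ := by
    intro t ht
    refine hM₁.2 ⟨_, ⟨?_, ?_⟩, rfl⟩
    · simpa only [hX0] using hmono 0 t ht.1
    · simpa only [hXh] using hmono t (1 / 2) ht.2
  have h2 : ∀ t ∈ Icc (1 / 2 : ℝ) 1, |F t| ≤ M₂ := by
    intro t ht
    refine hM₂.2 ⟨_, ⟨?_, ?_⟩, rfl⟩
    · simpa only [hXh] using hmono (1 / 2) t ht.1
    · simpa only [hX1] using hmono t 1 ht.2
  have hM₁0 : 0 ≤ M₁ := (abs_nonneg _).trans (h1 0 (by norm_num))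
  have hM₂0 : 0 ≤ M₂ := (abs_nonneg _).trans (h2 1 (by norm_num))
  have hfc : ContinuousOn f (Icc a b) := fun x hx =>
    (hf x (hsub hx)).continuousAt.continuousWithinAt
  have hcv := integral_change_variable f a b ha0 hab hfc
  have hbd : ∀ t ∈ Ioo (0:ℝ) 1,
      |f' (a * Real.exp (t * L))| ≤ |f' a| ^ ((1 - t) ^ s) * |f' b| ^ (t ^ s) := by
    intro t ht
    have := hconv a ⟨le_rfl, hab.le⟩ b ⟨hab.le, le_rfl⟩ (1 - t)
      ⟨by linarith [ht.2], by linarith [ht.1]⟩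
    rw [sub_sub_cancel, ← hX] at this
    exact deriv_bound _ _ _ q _ _ hq0 this
  rw [hcv, ← hXh]
  have hest := fun K => midpoint_estimate F F' K M₁ M₂ hF h1 h2
  by_cases hdeg : f' a = 0 ∨ f' b = 0
  -- A vanishing endpoint derivative forces `f' = 0` on the open interval, so the left side is `0`.
  · have h3 := hest (fun _ => 0) continuous_const ?_
    · simp only [mul_zero, add_zero, intervalIntegral.integral_zero] at h3
      refine h3.trans ?_
      have k1 := h₂_nonneg ((a * |f' a| ^ s / (b * |f' b| ^ s)) ^ (q / 2)) (by positivity)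
      have k2 := h₂_nonneg ((b * |f' b| ^ s / (a * |f' a| ^ s)) ^ (q / 2)) (by positivity)
      positivity
    · intro t ht
      have e := hbd t ht
      have hz : |f' a| ^ ((1 - t) ^ s) * |f' b| ^ (t ^ s) = 0 := by
        rcases hdeg with h | h
        · have : (1 - t) ^ s ≠ 0 := (Real.rpow_pos_of_pos (by linarith [ht.2]) s).ne'
          rw [h, abs_zero, Real.zero_rpow this, zero_mul]
        · have : t ^ s ≠ 0 := (Real.rpow_pos_of_pos ht.1 s).ne'
          rw [h, abs_zero, Real.zero_rpow this, mul_zero]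
      rw [hz] at e
      simp [hF'def, abs_nonpos_iff.1 e]
  · push Not at hdeg
    have hA1 : 0 < |f' a| := abs_pos.2 hdeg.1
    have hB1 : 0 < |f' b| := abs_pos.2 hdeg.2
    set A := a * |f' a| ^ s with hA
    set B := b * |f' b| ^ s with hB
    have hA0 : 0 < A := by positivity
    have hB0 : 0 < B := by positivity
    have h3 := hest (fun t => L * (A ^ (1 - t) * B ^ t)) ?_ ?_
    · refine h3.trans ?_
      have e : ∀ t : ℝ, t * (M₂ * (L * (A ^ (1 - t) * B ^ t))
          + M₁ * (L * (A ^ (1 - (1 - t)) * B ^ (1 - t))))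
          = M₂ * L * A * (t * (B / A) ^ t) + M₁ * L * B * (t * (A / B) ^ t) := by
        intro t
        rw [Real.div_rpow hB0.le hA0.le, Real.div_rpow hA0.le hB0.le, Real.rpow_sub hA0,
          Real.rpow_sub hB0, Real.rpow_one, Real.rpow_one, sub_sub_cancel]
        field_simp
      have hcr : ∀ (c r : ℝ), 0 < r →
          IntervalIntegrable (fun t : ℝ => c * (t * r ^ t)) volume 0 (1 / 2) := fun c r hr =>
        (continuous_const.mul
          (continuous_id.mul (Real.continuous_const_rpow hr.ne'))).intervalIntegrable _ _
      simp only [e]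
      rw [intervalIntegral.integral_add (hcr _ _ (by positivity)) (hcr _ _ (by positivity)),
        intervalIntegral.integral_const_mul, intervalIntegral.integral_const_mul,
        integral_half_mul_rpow _ (by positivity), integral_half_mul_rpow _ (by positivity)]
      have p : ∀ r : ℝ, 0 < r → h₂ (r ^ ((1:ℝ) / 2))
          ≤ ((1:ℝ) / 2) ^ (1 - 1 / q) * h₂ (r ^ (q / 2)) ^ (1 / q) := by
        intro r hr
        have := h₂_le_power_mean (r ^ ((1:ℝ) / 2)) q (by positivity) hq
        rwa [← Real.rpow_mul hr.le, show (1:ℝ) / 2 * q = q / 2 by ring] at this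
      have p1 := mul_le_mul_of_nonneg_left (p (B / A) (by positivity))
        (show 0 ≤ M₂ * L * A by positivity)
      have p2 := mul_le_mul_of_nonneg_left (p (A / B) (by positivity))
        (show 0 ≤ M₁ * L * B by positivity)
      have hc : ((1:ℝ) / 2) ^ (2 - 1 / q) = 1 / 2 * (1 / 2) ^ (1 - 1 / q) := by
        rw [show 2 - 1 / q = 1 + (1 - 1 / q) by ring, Real.rpow_add (by norm_num), Real.rpow_one]
      rw [hc]
      nlinarith [p1, p2]
    · have i1 := (Real.continuous_const_rpow hA0.ne').comp
        (continuous_const.sub continuous_id : Continuous fun t : ℝ => 1 - t)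
      exact continuous_const.mul (i1.mul (Real.continuous_const_rpow hB0.ne'))
    · intro t ht
      have ht' : 1 - t ∈ Ioo (0:ℝ) 1 := ⟨by linarith [ht.2], by linarith [ht.1]⟩
      have r1 := rpow_rpow_le _ _ s hA1 hfa ht' hs
      have r2 := rpow_rpow_le _ _ s hB1 hfb ht hs
      have r3 := (hbd t ht).trans (mul_le_mul r1 r2 (by positivity) (by positivity))
      have hXp : 0 < a * Real.exp (t * L) := by positivity
      calc |F' t| = |f' (a * Real.exp (t * L))| * (a * Real.exp (t * L)) * L := by
            simp only [hF'def]
            rw [abs_mul, abs_of_pos (by positivity : 0 < a * (Real.exp (t * L) * L))]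
            ring
        _ ≤ ((|f' a| ^ s) ^ (1 - t) * (|f' b| ^ s) ^ t) * (a * Real.exp (t * L)) * L := by
            gcongr
        _ = L * (A ^ (1 - t) * B ^ t) := by
            rw [hX, hA, hB, Real.mul_rpow ha0.le (by positivity),
              Real.mul_rpow hb0.le (by positivity)]
            ring
end

section
/- Let f : I ⊆ (0,∞) → (0,∞) be differentiable on I°, a, b ∈ I° with a < b, f' integrable on [a,b], and let |f'|^q be s-geometrically convex on [a,b] for some q ≥ 1 and s ∈ (0,1]. If |f'(a)| ≥ 1 and |f'(b)| ≥ 1, then |f(√(ab))² − (1/(ln b − ln a)) ∫_a^b (f(x)/x)·f(ab/x) dx| ≤ ln(b/a)·(1/2)^{2−1/q}·[ b·|f'(b)|·|f'(a)|^{1−s}·M₁·h₂(θ)^{1/q} + a·|f'(a)|·|f'(b)|^{1−s}·M₂·h₂(ϑ)^{1/q} ]. -/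
/-!
Writing `a = exp (m - h)`, `b = exp (m + h)`, the geometric mean is `√(ab) = exp m` and the
substitution `x = exp (m + h v)` turns the logarithmic mean of `f x * f (ab/x)` into the average over
`[0, 1]` of the (even) function `G v = f (exp (m + h v)) * f (exp (m - h v))`, while
`f (√(ab)) ^ 2 = G 0`. A derivative bound `|G'| ≤ β` gives
`|G 0 - ∫ G| ≤ ∫ (1 - v) β v` (`abs_sub_average_le`).

The bound `β` comes from geometric convexity: since `|f' a|, |f' b| ≥ 1`, the Bernoulli inequality
`l ^ s ≤ s l + 1 - s` makes the exponents affine in `l`, so `x |f' x|` at `x = exp (m ± h v)` is at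
most a constant times `exp (± κ (1 - v))` (`abs_deriv_le_of_geom_convex`). It remains to estimate
`∫ t exp (κ t)` by the power mean inequality for the weight `2 t dt` (`moment_le`), and to recognise
`∫ t exp (q κ t)` as `h₂ (exp (q κ))` (`h₂_exp`).
-/

open Real MeasureTheory Set intervalIntegral

/-- Integral form of `h₂`; it also covers the removable singularity `u = 1`. -/
lemma h₂_exp (k : ℝ) : h₂ (Real.exp k) = ∫ t in (0:ℝ)..1, t * Real.exp (k * t) := by
  unfold h₂
  by_cases hk : k = 0
  · subst hk
    simp
  · rw [if_neg (by simpa using hk), Real.log_exp]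
    have hd : ∀ t ∈ Set.uIcc (0:ℝ) 1,
        HasDerivAt (fun t => (k * t - 1) * Real.exp (k * t) / k ^ 2) (t * Real.exp (k * t)) t := by
      intro t _
      have h1 : HasDerivAt (fun t : ℝ => k * t) k t := by
        simpa using (hasDerivAt_id t).const_mul k
      have h2 := ((h1.sub_const 1).mul h1.exp).div_const (k ^ 2)
      refine h2.congr_deriv ?_
      field_simp
      ring
    rw [integral_eq_sub_of_hasDerivAt hd (Continuous.intervalIntegrable (by fun_prop) _ _)]
    simp
    field_simp
    ring

/-- Power mean inequality for the function `exp (k t)` and the probability weight `2 t dt` on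
`[0, 1]`. -/
lemma moment_le (k q : ℝ) (hq : 1 ≤ q) :
    h₂ (Real.exp k) ≤ ((1:ℝ) / 2) ^ (1 - 1 / q) * h₂ (Real.exp (q * k)) ^ (1 / q) := by
  have hq0 : 0 < q := by linarith
  rw [h₂_exp, h₂_exp]
  set J := ∫ t in (0:ℝ)..1, t * Real.exp (k * t) with hJ
  set Q := ∫ t in (0:ℝ)..1, t * Real.exp (q * k * t) with hQ
  have hJpos : 0 < J := by
    refine intervalIntegral_pos_of_pos_on (Continuous.intervalIntegrable (by fun_prop) _ _) ?_
      one_pos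
    intro t ht
    exact mul_pos ht.1 (Real.exp_pos _)
  have hm : 0 < 2 * J := by linarith
  -- Tangent line of `x ↦ x ^ q` at the mean `2 J`.
  have hpt : ∀ t ∈ Set.Icc (0:ℝ) 1,
      t * (1 - q) + q / (2 * J) * (t * Real.exp (k * t))
        ≤ (t * Real.exp (q * k * t)) / (2 * J) ^ q := by
    intro t ht
    have h1 := one_add_mul_self_le_rpow_one_add (s := Real.exp (k * t) / (2 * J) - 1)
      (by have : 0 < Real.exp (k * t) / (2 * J) := by positivity
          linarith) hq
    rw [add_sub_cancel, Real.div_rpow (Real.exp_pos _).le hm.le, ← Real.exp_mul] at h1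
    have h2 := mul_le_mul_of_nonneg_left h1 ht.1
    have e : k * t * q = q * k * t := by ring
    rw [e] at h2
    calc _ = t * (1 + q * (Real.exp (k * t) / (2 * J) - 1)) := by ring
      _ ≤ _ := h2
      _ = _ := by ring
  have hint := integral_mono_on (μ := volume) (zero_le_one' ℝ)
    (Continuous.intervalIntegrable (by fun_prop) _ _)
    (Continuous.intervalIntegrable (by fun_prop) _ _) hpt
  rw [intervalIntegral.integral_add (Continuous.intervalIntegrable (by fun_prop) _ _)
    (Continuous.intervalIntegrable (by fun_prop) _ _), intervalIntegral.integral_mul_const,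
    intervalIntegral.integral_const_mul, intervalIntegral.integral_div, ← hJ, ← hQ,
    integral_id] at hint
  have hle : (2 * J) ^ q ≤ 2 * Q := by
    have e : q / (2 * J) * J = q / 2 := by field_simp
    rw [e] at hint
    have h3 : 1 / 2 ≤ Q / (2 * J) ^ q := by linarith
    rw [le_div_iff₀ (by positivity)] at h3
    linarith
  have hQ0 : 0 ≤ Q := by
    have : 0 < (2 * J) ^ q := by positivity
    linarith
  have h4 : 2 * J ≤ (2 * Q) ^ (1 / q) := by
    have := Real.rpow_le_rpow (by positivity) hle (by positivity : 0 ≤ 1 / q)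
    rwa [← Real.rpow_mul hm.le, mul_one_div_cancel hq0.ne', Real.rpow_one] at this
  rw [Real.mul_rpow (by norm_num) hQ0] at h4
  rw [Real.rpow_sub (by norm_num), Real.rpow_one, Real.div_rpow (by norm_num) (by norm_num),
    Real.one_rpow]
  have h5 : (0:ℝ) < 2 ^ (1 / q) := by positivity
  have e : (1:ℝ) / 2 / (1 / 2 ^ (1 / q)) * Q ^ (1 / q) = 2 ^ (1 / q) * Q ^ (1 / q) / 2 := by
    field_simp
  rw [e]
  linarith

/-- If `|G'| ≤ β`, then `|G v - G 0| ≤ ∫ β` over `[0, v]`; averaging over `v` and integrating by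
parts produces the weight `1 - v`. The mean value inequality replaces integration of `G'`. -/
lemma abs_sub_average_le (G G' β : ℝ → ℝ) (hβ : Continuous β)
    (hG : ∀ v ∈ Set.Icc (0:ℝ) 1, HasDerivAt G (G' v) v)
    (hb : ∀ v ∈ Set.Icc (0:ℝ) 1, |G' v| ≤ β v) :
    |G 0 - ∫ v in (0:ℝ)..1, G v| ≤ ∫ v in (0:ℝ)..1, (1 - v) * β v := by
  set S : ℝ → ℝ := fun v => ∫ t in (0:ℝ)..v, β t with hS
  have hSd : ∀ v, HasDerivAt S (β v) v := fun v =>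
    integral_hasDerivAt_right (hβ.intervalIntegrable _ _)
      (hβ.stronglyMeasurableAtFilter _ _) hβ.continuousAt
  have hSc : Continuous S := continuous_iff_continuousAt.2 fun v => (hSd v).continuousAt
  have hGc : ContinuousOn G (Set.Icc 0 1) := fun v hv => (hG v hv).continuousAt.continuousWithinAt
  have hGi : IntervalIntegrable G volume 0 1 :=
    ContinuousOn.intervalIntegrable (by rwa [Set.uIcc_of_le zero_le_one])
  have hbd : ∀ v ∈ Set.Icc (0:ℝ) 1, ‖G v - G 0‖ ≤ S v := by
    refine image_norm_le_of_norm_deriv_right_le_deriv_boundary (f' := G') (B' := β)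
      (hGc.sub continuousOn_const) ?_ ?_ hSd ?_
    · intro v hv
      exact ((hG v ⟨hv.1, hv.2.le⟩).sub_const _).hasDerivWithinAt
    · simp [hS]
    · intro v hv
      exact hb v ⟨hv.1, hv.2.le⟩
  have h1 : G 0 - ∫ v in (0:ℝ)..1, G v = -∫ v in (0:ℝ)..1, (G v - G 0) := by
    rw [intervalIntegral.integral_sub hGi (by simp)]
    simp
  have h2 : ∫ v in (0:ℝ)..1, (1 - v) * β v = ∫ v in (0:ℝ)..1, S v := by
    have := integral_mul_deriv_eq_deriv_mul (a := 0) (b := 1) (u := fun v => 1 - v)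
      (u' := fun _ => -1) (v := S) (v' := β)
      (fun v _ => by simpa using (hasDerivAt_id v).const_sub 1) (fun v _ => hSd v)
      (by simp) (hβ.intervalIntegrable _ _)
    rw [this]
    simp [hS]
  rw [h1, h2, abs_neg]
  exact norm_integral_le_of_norm_le zero_le_one
    (by filter_upwards with v hv using hbd v ⟨hv.1.le, hv.2⟩) (hSc.intervalIntegrable _ _)

/-- Extracting `q`-th roots in the convexity hypothesis and replacing `l ^ s` by the larger affine
expression `s l + 1 - s`; enlarging the exponents is harmless because both bases are at least
one. -/
lemma abs_deriv_le_of_geom_convex {A B X q s l : ℝ} (hA : 1 ≤ A) (hB : 1 ≤ B) (hX : 0 ≤ X)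
    (hq : 1 ≤ q) (hs : s ∈ Set.Ioc (0:ℝ) 1) (hl : l ∈ Set.Icc (0:ℝ) 1)
    (h : X ^ q ≤ (A ^ q) ^ (l ^ s) * (B ^ q) ^ ((1 - l) ^ s)) :
    X ≤ Real.exp (Real.log A * (s * l + 1 - s) + Real.log B * (s * (1 - l) + 1 - s)) := by
  have hA0 : 0 < A := by linarith
  have hB0 : 0 < B := by linarith
  have hq0 : 0 < q := by linarith
  have bern : ∀ t ∈ Set.Icc (0:ℝ) 1, t ^ s ≤ s * t + 1 - s := by
    intro t ht
    have := rpow_one_add_le_one_add_mul_self (s := t - 1) (by linarith [ht.1]) hs.1.le hs.2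
    rw [add_sub_cancel] at this
    linarith
  have h1 : X ^ q ≤ (A ^ (l ^ s) * B ^ ((1 - l) ^ s)) ^ q := by
    rw [Real.mul_rpow (by positivity) (by positivity), ← Real.rpow_mul hA0.le,
      ← Real.rpow_mul hB0.le, mul_comm (l ^ s), mul_comm ((1 - l) ^ s), Real.rpow_mul hA0.le,
      Real.rpow_mul hB0.le]
    exact h
  have h2 := (Real.rpow_le_rpow_iff hX (by positivity) hq0).1 h1
  refine h2.trans ?_
  rw [Real.exp_add, ← Real.rpow_def_of_pos hA0, ← Real.rpow_def_of_pos hB0]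
  exact mul_le_mul (Real.rpow_le_rpow_of_exponent_le hA (bern l hl))
    (Real.rpow_le_rpow_of_exponent_le hB (bern (1 - l) ⟨by linarith [hl.2], by linarith [hl.1]⟩))
    (by positivity) (by positivity)

/-- The substitution `x = exp (m + h v)`, combined with the evenness of the resulting integrand. -/
lemma integral_log_subst (f : ℝ → ℝ) (m h : ℝ) (hh : 0 < h)
    (hf : ContinuousOn f (Set.Icc (Real.exp (m - h)) (Real.exp (m + h)))) :
    ∫ x in (Real.exp (m - h))..(Real.exp (m + h)),
        (f x / x) * f (Real.exp (m - h) * Real.exp (m + h) / x)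
      = 2 * h * ∫ v in (0:ℝ)..1, f (Real.exp (m + h * v)) * f (Real.exp (m - h * v)) := by
  set g : ℝ → ℝ := fun x => (f x / x) * f (Real.exp (m - h) * Real.exp (m + h) / x) with hg
  set G : ℝ → ℝ := fun v => f (Real.exp (m + h * v)) * f (Real.exp (m - h * v)) with hG
  have hmem : ∀ v ∈ Set.Icc (-1:ℝ) 1,
      Real.exp (m + h * v) ∈ Set.Icc (Real.exp (m - h)) (Real.exp (m + h)) := by
    intro v hv
    constructor <;> apply Real.exp_le_exp.2 <;> nlinarith [hv.1, hv.2]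
  have hGc : ContinuousOn G (Set.Icc (-1) 1) := by
    refine ContinuousOn.mul (hf.comp (by fun_prop) hmem) (hf.comp (by fun_prop) ?_)
    intro v hv
    have := hmem (-v) ⟨by linarith [hv.2], by linarith [hv.1]⟩
    rwa [mul_neg, ← sub_eq_add_neg] at this
  have hgc : ContinuousOn g (Set.Icc (Real.exp (m - h)) (Real.exp (m + h))) := by
    have hne : ∀ x ∈ Set.Icc (Real.exp (m - h)) (Real.exp (m + h)), x ≠ 0 := fun x hx =>
      ((Real.exp_pos _).trans_le hx.1).ne'
    refine (hf.div continuousOn_id hne).mul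
      (hf.comp (continuousOn_const.div continuousOn_id hne) ?_)
    intro x hx
    have hx0 : 0 < x := (Real.exp_pos _).trans_le hx.1
    have e1 := Real.exp_pos (m - h)
    have e2 := Real.exp_pos (m + h)
    constructor
    · rw [le_div_iff₀ hx0]
      exact mul_le_mul_of_nonneg_left hx.2 e1.le
    · rw [div_le_iff₀ hx0, mul_comm]
      exact mul_le_mul_of_nonneg_left hx.1 e2.le
  have hsub := integral_comp_mul_deriv'' (a := -1) (b := 1) (f := fun v => Real.exp (m + h * v))
    (f' := fun v => Real.exp (m + h * v) * h) (g := g) (by fun_prop)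
    (fun v _ => by
      have h1 : HasDerivAt (fun v : ℝ => m + h * v) h v := by
        simpa using ((hasDerivAt_id v).const_mul h).const_add m
      exact h1.exp.hasDerivWithinAt) (by fun_prop)
    (hgc.mono (by
      rintro _ ⟨v, hv, rfl⟩
      rw [Set.uIcc_of_le (by norm_num)] at hv
      exact hmem v hv))
  have e1 : m + h * (-1) = m - h := by ring
  simp only [e1, mul_one] at hsub
  rw [← hsub]
  have e2 : ∀ v, (g ∘ fun v => Real.exp (m + h * v)) v * (Real.exp (m + h * v) * h)
      = h * G v := by
    intro v
    have e3 : Real.exp (m - h) * Real.exp (m + h) / Real.exp (m + h * v)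
        = Real.exp (m - h * v) := by
      rw [← Real.exp_add, ← Real.exp_sub]
      congr 1
      ring
    simp only [Function.comp, hg, hG, e3]
    have := (Real.exp_pos (m + h * v)).ne'
    field_simp
  simp only [e2]
  rw [intervalIntegral.integral_const_mul]
  have hi : ∀ x ∈ Set.Icc (-1:ℝ) 1, ∀ y ∈ Set.Icc (-1:ℝ) 1, IntervalIntegrable G volume x y :=
    fun x hx y hy => (hGc.mono (Set.uIcc_subset_Icc hx hy)).intervalIntegrable
  rw [← integral_add_adjacent_intervals (b := 0) (hi _ (by simp) _ (by simp))
    (hi _ (by simp) _ (by simp))]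
  have e4 : ∫ v in (-1:ℝ)..0, G v = ∫ v in (0:ℝ)..1, G v := by
    have h1 := integral_comp_neg (a := 0) (b := 1) G
    rw [neg_zero] at h1
    rw [← h1]
    congr 1
    funext v
    simp only [hG, mul_neg, sub_neg_eq_add, ← sub_eq_add_neg]
    ring
  rw [e4]
  ring

theorem stmt_7 (I : Set ℝ) (hI : I ⊆ Set.Ioi (0:ℝ)) (hI' : I.OrdConnected)
    (f f' : ℝ → ℝ) (a b : ℝ) (ha : a ∈ interior I) (hb : b ∈ interior I) (hab : a < b)
    (hf : ∀ x ∈ interior I, HasDerivAt f (f' x) x)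
    (hint : IntervalIntegrable f' volume a b)
    (hpos : ∀ x ∈ I, 0 < f x)
    (q s : ℝ) (hq : 1 ≤ q) (hs : s ∈ Set.Ioc (0:ℝ) 1)
    (hconv : ∀ x ∈ Set.Icc a b, ∀ y ∈ Set.Icc a b, ∀ l ∈ Set.Icc (0:ℝ) 1,
      |f' (x ^ l * y ^ (1 - l))| ^ q ≤ (|f' x| ^ q) ^ (l ^ s) * (|f' y| ^ q) ^ ((1 - l) ^ s))
    (M₁ M₂ : ℝ)
    (hM₁ : IsGreatest ((fun x => |f x|) '' Set.Icc a (Real.sqrt (a*b))) M₁)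
    (hM₂ : IsGreatest ((fun x => |f x|) '' Set.Icc (Real.sqrt (a*b)) b) M₂)
    (hfa : 1 ≤ |f' a|) (hfb : 1 ≤ |f' b|) :
    |f (Real.sqrt (a*b)) ^ 2 - (1 / (Real.log b - Real.log a)) * ∫ x in a..b, (f x / x) * f (a * b / x)|
      ≤ Real.log (b / a) * ((1:ℝ) / 2) ^ (2 - 1 / q) *
        (b * |f' b| * |f' a| ^ (1 - s) * M₁ * (h₂ ((a * |f' a| ^ s / (b * |f' b| ^ s)) ^ (q / 2))) ^ (1 / q)
          + a * |f' a| * |f' b| ^ (1 - s) * M₂ * (h₂ ((b * |f' b| ^ s / (a * |f' a| ^ s)) ^ (q / 2))) ^ (1 / q)) := by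
  have hab' : Set.Icc a b ⊆ interior I := hI'.interior.out ha hb
  have ha0 : 0 < a := hI (interior_subset ha)
  have hb0 : 0 < b := hI (interior_subset hb)
  obtain ⟨m, h, ham, hbm⟩ : ∃ m h, a = Real.exp (m - h) ∧ b = Real.exp (m + h) :=
    ⟨(Real.log a + Real.log b) / 2, (Real.log b - Real.log a) / 2,
      by rw [← Real.exp_log ha0]; congr 1; simp; ring,
      by rw [← Real.exp_log hb0]; congr 1; simp; ring⟩
  have hh : 0 < h := by
    rw [ham, hbm, Real.exp_lt_exp] at hab
    linarith
  have hsqrt : Real.sqrt (a * b) = Real.exp m := by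
    rw [ham, hbm, ← Real.exp_add, show m - h + (m + h) = m + m by ring, Real.exp_add,
      Real.sqrt_mul_self (Real.exp_pos _).le]
  have hlog : Real.log b - Real.log a = 2 * h := by
    rw [ham, hbm, Real.log_exp, Real.log_exp]
    ring
  rw [Real.log_div hb0.ne' ha0.ne', hlog]
  rw [hsqrt] at hM₁ hM₂ ⊢
  have hA0 : 0 < |f' a| := by linarith
  have hB0 : 0 < |f' b| := by linarith
  set A := |f' a| with hA
  set B := |f' b| with hB
  -- `κ` is half the logarithm of `a A ^ s / (b B ^ s)`, so that both arguments of `h₂` are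
  -- `exp (± q κ)`.
  set κ := (-2 * h + s * Real.log A - s * Real.log B) / 2 with hκ
  have hAs : ∀ r, A ^ r = Real.exp (Real.log A * r) := Real.rpow_def_of_pos hA0
  have hBs : ∀ r, B ^ r = Real.exp (Real.log B * r) := Real.rpow_def_of_pos hB0
  have hθ : (a * A ^ s / (b * B ^ s)) ^ (q / 2) = Real.exp (q * κ) := by
    rw [hAs, hBs, ham, hbm, ← Real.exp_add, ← Real.exp_add, ← Real.exp_sub, ← Real.exp_mul]
    congr 1
    rw [hκ]
    ring
  have hϑ : (b * B ^ s / (a * A ^ s)) ^ (q / 2) = Real.exp (q * -κ) := by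
    rw [hAs, hBs, ham, hbm, ← Real.exp_add, ← Real.exp_add, ← Real.exp_sub, ← Real.exp_mul]
    congr 1
    rw [hκ]
    ring
  rw [hθ, hϑ]
  have hmem : ∀ w ∈ Set.Icc (-1:ℝ) 1, Real.exp (m + h * w) ∈ Set.Icc a b := by
    intro w hw
    rw [ham, hbm]
    constructor <;> apply Real.exp_le_exp.2 <;> nlinarith [hw.1, hw.2]
  -- The point `exp (m + h w)` is `a ^ l * b ^ (1 - l)` with `l = (1 - w) / 2`.
  have hbound : ∀ w ∈ Set.Icc (-1:ℝ) 1, |f' (Real.exp (m + h * w))| ≤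
      Real.exp (Real.log A * (s * ((1 - w) / 2) + 1 - s)
        + Real.log B * (s * (1 - (1 - w) / 2) + 1 - s)) := by
    intro w hw
    have hl : (1 - w) / 2 ∈ Set.Icc (0:ℝ) 1 := ⟨by linarith [hw.2], by linarith [hw.1]⟩
    have hc := hconv a ⟨le_rfl, hab.le⟩ b ⟨hab.le, le_rfl⟩ _ hl
    have hx : a ^ ((1 - w) / 2) * b ^ (1 - (1 - w) / 2) = Real.exp (m + h * w) := by
      rw [ham, hbm, ← Real.exp_mul, ← Real.exp_mul, ← Real.exp_add]
      congr 1
      ring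
    rw [hx] at hc
    exact abs_deriv_le_of_geom_convex hfa hfb (abs_nonneg _) hq hs hl hc
  set C₁ := b * B * A ^ (1 - s) with hC₁
  set C₂ := a * A * B ^ (1 - s) with hC₂
  have hC₁e : C₁ = Real.exp (m + h + Real.log B + Real.log A * (1 - s)) := by
    rw [Real.exp_add, Real.exp_add, Real.exp_log hB0, ← hAs, ← hbm]
  have hC₂e : C₂ = Real.exp (m - h + Real.log A + Real.log B * (1 - s)) := by
    rw [Real.exp_add, Real.exp_add, Real.exp_log hA0, ← hBs, ← ham]
  have hd₁ : ∀ v ∈ Set.Icc (0:ℝ) 1, |f' (Real.exp (m + h * v))| * Real.exp (m + h * v)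
      ≤ C₁ * Real.exp (κ * (1 - v)) := by
    intro v hv
    refine (mul_le_mul_of_nonneg_right (hbound v ⟨by linarith [hv.1], hv.2⟩)
      (Real.exp_pos _).le).trans_eq ?_
    rw [hC₁e, ← Real.exp_add, ← Real.exp_add]
    congr 1
    rw [hκ]
    ring
  have hd₂ : ∀ v ∈ Set.Icc (0:ℝ) 1, |f' (Real.exp (m - h * v))| * Real.exp (m - h * v)
      ≤ C₂ * Real.exp (-κ * (1 - v)) := by
    intro v hv
    have hb' := hbound (-v) ⟨by linarith [hv.2], by linarith [hv.1]⟩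
    rw [mul_neg, ← sub_eq_add_neg] at hb'
    refine (mul_le_mul_of_nonneg_right hb' (Real.exp_pos _).le).trans_eq ?_
    rw [hC₂e, ← Real.exp_add, ← Real.exp_add]
    congr 1
    rw [hκ]
    ring
  have hfM₁ : ∀ v ∈ Set.Icc (0:ℝ) 1, |f (Real.exp (m - h * v))| ≤ M₁ := by
    intro v hv
    refine hM₁.2 ⟨_, ⟨?_, ?_⟩, rfl⟩
    · rw [ham]
      apply Real.exp_le_exp.2
      nlinarith [hv.2]
    · apply Real.exp_le_exp.2
      nlinarith [hv.1]
  have hfM₂ : ∀ v ∈ Set.Icc (0:ℝ) 1, |f (Real.exp (m + h * v))| ≤ M₂ := by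
    intro v hv
    refine hM₂.2 ⟨_, ⟨?_, ?_⟩, rfl⟩
    · apply Real.exp_le_exp.2
      nlinarith [hv.1]
    · rw [hbm]
      apply Real.exp_le_exp.2
      nlinarith [hv.2]
  have hM₁0 : 0 ≤ M₁ := (abs_nonneg _).trans (hfM₁ 0 (by simp))
  have hM₂0 : 0 ≤ M₂ := (abs_nonneg _).trans (hfM₂ 0 (by simp))
  have hC₁0 : 0 ≤ C₁ := by positivity
  have hC₂0 : 0 ≤ C₂ := by positivity
  set G : ℝ → ℝ := fun v => f (Real.exp (m + h * v)) * f (Real.exp (m - h * v)) with hG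
  have hGd : ∀ v ∈ Set.Icc (0:ℝ) 1, HasDerivAt G
      (f' (Real.exp (m + h * v)) * (Real.exp (m + h * v) * h) * f (Real.exp (m - h * v))
        + f (Real.exp (m + h * v)) * (f' (Real.exp (m - h * v)) * (Real.exp (m - h * v) * -h)))
      v := by
    intro v hv
    have hx₁ := hf _ (hab' (hmem v ⟨by linarith [hv.1], hv.2⟩))
    have hx₂ := hf _ (hab' (hmem (-v) ⟨by linarith [hv.2], by linarith [hv.1]⟩))
    rw [mul_neg, ← sub_eq_add_neg] at hx₂
    have h1 : HasDerivAt (fun v : ℝ => m + h * v) h v := by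
      simpa using ((hasDerivAt_id v).const_mul h).const_add m
    have h2 : HasDerivAt (fun v : ℝ => m - h * v) (-h) v := by
      simpa using ((hasDerivAt_id v).const_mul h).const_sub m
    exact (hx₁.comp v h1.exp).mul (hx₂.comp v h2.exp)
  -- In `G'` the factor `f` is evaluated on the opposite half of `[a, b]` from `f'`, so `M₁` is
  -- paired with the bound for `f'` near `b`, and `M₂` with the one near `a`.
  have key := abs_sub_average_le G _ (fun v => h * (M₁ * C₁ * Real.exp (κ * (1 - v))
    + M₂ * C₂ * Real.exp (-κ * (1 - v)))) (by fun_prop) hGd (by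
      intro v hv
      refine (abs_add_le _ _).trans ?_
      simp only [abs_mul, abs_neg, Real.abs_exp, abs_of_pos hh]
      have t₁ := mul_le_mul (hd₁ v hv) (hfM₁ v hv) (abs_nonneg _) (by positivity)
      have t₂ := mul_le_mul (hd₂ v hv) (hfM₂ v hv) (abs_nonneg _) (by positivity)
      have := mul_le_mul_of_nonneg_left (add_le_add t₁ t₂) hh.le
      calc _ = _ := by ring
        _ ≤ _ := this
        _ = _ := by ring)
  have hmom : ∀ k : ℝ, ∫ v in (0:ℝ)..1, (1 - v) * Real.exp (k * (1 - v)) = h₂ (Real.exp k) := by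
    intro k
    rw [h₂_exp, integral_comp_sub_left (fun t => t * Real.exp (k * t)) 1]
    simp
  have hR : ∫ v in (0:ℝ)..1, (1 - v) * (h * (M₁ * C₁ * Real.exp (κ * (1 - v))
      + M₂ * C₂ * Real.exp (-κ * (1 - v))))
      = h * (M₁ * C₁ * h₂ (Real.exp κ) + M₂ * C₂ * h₂ (Real.exp (-κ))) := by
    rw [← hmom κ, ← hmom (-κ), ← intervalIntegral.integral_const_mul,
      ← intervalIntegral.integral_const_mul, ← intervalIntegral.integral_add
        (Continuous.intervalIntegrable (by fun_prop) _ _)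
        (Continuous.intervalIntegrable (by fun_prop) _ _), ← intervalIntegral.integral_const_mul]
    congr 1
    funext v
    ring
  have hcont : ContinuousOn f (Set.Icc a b) := fun x hx =>
    (hf x (hab' hx)).continuousAt.continuousWithinAt
  have hL : f (Real.exp m) ^ 2 - 1 / (2 * h) * ∫ x in a..b, (f x / x) * f (a * b / x)
      = G 0 - ∫ v in (0:ℝ)..1, G v := by
    rw [ham, hbm] at hcont ⊢
    rw [integral_log_subst f m h hh hcont]
    simp only [hG, mul_zero, add_zero, sub_zero]
    field_simp
  rw [hL]
  rw [hR] at key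
  refine key.trans ?_
  have hp : ((1:ℝ) / 2) ^ (2 - 1 / q) = 1 / 2 * (1 / 2) ^ (1 - 1 / q) := by
    rw [show 2 - 1 / q = 1 + (1 - 1 / q) by ring, Real.rpow_add (by norm_num), Real.rpow_one]
  rw [hp]
  have j₁ := mul_le_mul_of_nonneg_left (moment_le κ q hq) (mul_nonneg hM₁0 hC₁0)
  have j₂ := mul_le_mul_of_nonneg_left (moment_le (-κ) q hq) (mul_nonneg hM₂0 hC₂0)
  calc _ ≤ _ := mul_le_mul_of_nonneg_left (add_le_add j₁ j₂) hh.le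
    _ = _ := by ring
end
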